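/- arXiv:1003.5388 — 3 statements merged into one kernel-verified Lean document; each statement's English description precedes it below -/
import Mathlib

section
/- Let f : ℕ → ℤ be a completely multiplicative function taking values in {-1, 1}, and let σ be a real number with 1/2 < σ ≤ 1. If ∑_{p ≤ x} f(p)/p^σ → ∞ as x → ∞ (the sum over primes p), then the partial sums of f are unbounded: lim sup_{N→∞} |∑_{n=1}^{N} f(n)| = ∞. -/
open MeasureTheory ProbabilityTheory Filter Topology Set
open scoped ENNReal NNReal Nat

/-- Landau's lemma for moment generating functions. -/
lemma landau_mgf {Ω : Type*} [MeasurableSpace Ω] {μ : Measure Ω} {X : Ω → ℝ}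
    (hX : ∀ᵐ x ∂μ, 0 ≤ X x) (b : ℝ)
    (hI : ∀ u < b, u ∈ integrableExpSet X μ) (h : ℝ → ℝ) (hh : AnalyticAt ℝ h b)
    (heq : ∀ u < b, h u = mgf X μ u) :
    ∃ v > b, v ∈ integrableExpSet X μ := by
  obtain ⟨p, r, hp⟩ := hh
  obtain ⟨δ, hδ, hδr⟩ : ∃ δ : ℝ≥0, 0 < δ ∧ (4 * δ : ℝ≥0∞) < r := by
    obtain ⟨e, he, her⟩ := ENNReal.lt_iff_exists_nnreal_btwn.mp hp.r_pos
    refine ⟨e / 4, by have : 0 < e := by exact_mod_cast he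
                      positivity, ?_⟩
    rw [← ENNReal.coe_ofNat, ← ENNReal.coe_mul, mul_div_cancel₀ _ (by norm_num)]
    exact her
  have hδ' : (0:ℝ) < δ := hδ
  have hn : ‖(-(δ:ℝ))‖₊ = δ := by ext; simp
  have h1 := hp.changeOrigin (y := -(δ:ℝ)) (by
    rw [hn]; refine lt_of_le_of_lt ?_ hδr
    nth_rewrite 1 [← one_mul (δ : ℝ≥0∞)]; gcongr; norm_num)
  rw [hn] at h1
  have hint : ∀ u < b, u ∈ interior (integrableExpSet X μ) := fun u hu =>
    mem_interior.mpr ⟨Iio b, fun v hv => hI v hv, isOpen_Iio, hu⟩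
  have hub : b + -(δ:ℝ) < b := by linarith
  have hu := hint _ hub
  have h2 := hasFPowerSeriesAt_mgf hu
  have h3 := h1.hasFPowerSeriesAt.eq_formalMultilinearSeries_of_eventually h2
    (by filter_upwards [Iio_mem_nhds hub] with z hz using heq z hz)
  have h4 := h1.hasSum (y := 2 * (δ:ℝ)) (by
    rw [Metric.mem_eball, edist_zero_right, enorm_mul]
    have : ‖(δ:ℝ)‖ₑ = δ := by simp
    rw [this]
    have : ‖(2:ℝ)‖ₑ = 2 := by simp [enorm]
    rw [this, lt_tsub_iff_right]
    refine lt_of_le_of_lt ?_ hδr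
    have : (4:ℝ≥0∞) = 2 + 2 := by norm_num
    rw [this, add_mul]; gcongr
    nth_rewrite 1 [← one_mul (δ : ℝ≥0∞)]; gcongr; norm_num)
  rw [h3] at h4
  set u := b + -(δ:ℝ) with hudef
  have h5 := h4.summable
  simp only [FormalMultilinearSeries.ofScalars_apply_eq, smul_eq_mul] at h5
  refine ⟨u + 2 * δ, by simp only [hudef]; linarith, ?_⟩
  have hXm := aemeasurable_of_mem_interior_integrableExpSet hu
  have hm : AEMeasurable (fun ω => Real.exp ((u + 2 * δ) * X ω)) μ := by fun_prop
  refine ⟨hm.aestronglyMeasurable, ?_⟩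
  rw [hasFiniteIntegral_iff_ofReal (ae_of_all _ fun _ => (Real.exp_pos _).le)]
  have e1 : ∫⁻ ω, ENNReal.ofReal (Real.exp ((u + 2 * δ) * X ω)) ∂μ
      = ∫⁻ ω, ∑' n : ℕ, ENNReal.ofReal
        ((X ω ^ n * Real.exp (u * X ω)) * ((2 * δ) ^ n / n !)) ∂μ := by
    refine lintegral_congr_ae ?_
    filter_upwards [hX] with ω hω
    have hs : HasSum (fun n : ℕ => (X ω ^ n * Real.exp (u * X ω)) * ((2 * (δ:ℝ)) ^ n / n !))
        (Real.exp ((u + 2 * δ) * X ω)) := by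
      have := (NormedSpace.expSeries_div_hasSum_exp (2 * δ * X ω : ℝ)).mul_left
        (Real.exp (u * X ω))
      rw [← Real.exp_eq_exp_ℝ, ← Real.exp_add] at this
      rw [show (u + 2 * (δ:ℝ)) * X ω = u * X ω + 2 * δ * X ω from add_mul _ _ _]
      have e : (fun n : ℕ => (X ω ^ n * Real.exp (u * X ω)) * ((2 * (δ:ℝ)) ^ n / n !)) =
          fun n : ℕ => Real.exp (u * X ω) * ((2 * δ * X ω) ^ n / n !) := by
        funext n; rw [mul_pow]; ring
      rw [e]; exact this
    rw [← hs.tsum_eq, ENNReal.ofReal_tsum_of_nonneg _ hs.summable]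
    intro n; positivity
  rw [e1, lintegral_tsum]
  swap
  · intro n; fun_prop
  have e2 : ∀ n : ℕ, ∫⁻ ω, ENNReal.ofReal
        ((X ω ^ n * Real.exp (u * X ω)) * ((2 * δ) ^ n / n !)) ∂μ
      = ENNReal.ofReal ((∫ ω, X ω ^ n * Real.exp (u * X ω) ∂μ) * ((2 * δ) ^ n / n !)) := by
    intro n
    rw [← integral_mul_const, ofReal_integral_eq_lintegral_ofReal]
    · exact (integrable_pow_mul_exp_of_mem_interior_integrableExpSet hu n).mul_const _
    · filter_upwards [hX] with ω hω
      simp only [Pi.zero_apply]; positivity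
  simp_rw [e2]
  rw [← ENNReal.ofReal_tsum_of_nonneg]
  · exact ENNReal.ofReal_lt_top
  · intro n
    refine mul_nonneg (integral_nonneg_of_ae ?_) (by positivity)
    filter_upwards [hX] with ω hω
    simp only [Pi.zero_apply]; positivity
  · refine h5.congr fun n => ?_
    ring

/-- the weighted measure `B(⌊x⌋)/x dx` on `(1,∞)`. -/
noncomputable def nuM (B : ℕ → ℝ) : Measure ℝ :=
  (volume.restrict (Ioi 1)).withDensity (fun x => ENNReal.ofReal (B ⌊x⌋₊ / x))

lemma nuM_meas (B : ℕ → ℝ) : Measurable (fun x : ℝ => ENNReal.ofReal (B ⌊x⌋₊ / x)) := by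
  have : Measurable (fun x : ℝ => B ⌊x⌋₊) := (measurable_from_nat (f := B)).comp Nat.measurable_floor
  fun_prop

lemma nuM_ptw (B : ℕ → ℝ) (hB : ∀ n, 0 ≤ B n) (u : ℝ) {x : ℝ} (hx : x ∈ Ioi (1:ℝ)) :
    (ENNReal.ofReal (B ⌊x⌋₊ / x)).toReal • Real.exp (u * Real.log x) = B ⌊x⌋₊ * x ^ (u - 1) := by
  have hx0 : (0:ℝ) < x := lt_trans one_pos hx
  rw [ENNReal.toReal_ofReal (div_nonneg (hB _) hx0.le), Real.rpow_sub_one hx0.ne',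
    Real.rpow_def_of_pos hx0, smul_eq_mul, mul_comm u]
  ring

lemma nuM_mem (B : ℕ → ℝ) (hB : ∀ n, 0 ≤ B n) (u : ℝ) :
    u ∈ integrableExpSet Real.log (nuM B) ↔
      IntegrableOn (fun x : ℝ => B ⌊x⌋₊ * x ^ (u - 1)) (Ioi 1) := by
  unfold integrableExpSet nuM
  rw [mem_ofPred_eq, integrable_withDensity_iff_integrable_smul' (nuM_meas B)
    (ae_of_all _ fun _ => ENNReal.ofReal_lt_top)]
  exact integrableOn_congr_fun (fun x hx => nuM_ptw B hB u hx) measurableSet_Ioi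

lemma nuM_mgf (B : ℕ → ℝ) (hB : ∀ n, 0 ≤ B n) (u : ℝ) :
    mgf Real.log (nuM B) u = ∫ x in Ioi (1:ℝ), B ⌊x⌋₊ * x ^ (u - 1) := by
  unfold mgf nuM
  rw [integral_withDensity_eq_integral_toReal_smul (nuM_meas B)
    (ae_of_all _ fun _ => ENNReal.ofReal_lt_top)]
  exact setIntegral_congr_fun measurableSet_Ioi (fun x hx => nuM_ptw B hB u hx)

lemma nuM_nonneg (B : ℕ → ℝ) : ∀ᵐ x ∂(nuM B), 0 ≤ Real.log x := by
  refine (withDensity_absolutelyContinuous _ _).ae_le ?_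
  filter_upwards [ae_restrict_mem measurableSet_Ioi] with x hx
  exact Real.log_nonneg (le_of_lt hx)

lemma nuM_down (B : ℕ → ℝ) {u v : ℝ} (huv : u ≤ v)
    (hv : v ∈ integrableExpSet Real.log (nuM B)) : u ∈ integrableExpSet Real.log (nuM B) := by
  refine Integrable.mono hv (by fun_prop) ?_
  filter_upwards [nuM_nonneg B] with x hx
  simp only [Real.norm_eq_abs, Real.abs_exp]
  gcongr

lemma nuM_abel (a : ℕ → ℝ) (ha : ∀ n, |a n| ≤ 1) (K : ℝ)
    (hB : ∀ n, 0 ≤ ∑ k ∈ Finset.Icc 1 n, a k + K) (s : ℝ) (hs : 1 < s) :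
    -s ∈ integrableExpSet Real.log (nuM (fun n => ∑ k ∈ Finset.Icc 1 n, a k + K)) ∧
    ∑' n : ℕ, a n * (n:ℝ) ^ (-s) =
      s * mgf Real.log (nuM (fun n => ∑ k ∈ Finset.Icc 1 n, a k + K)) (-s) - K := by
  have hbd : ∀ n : ℕ, |∑ k ∈ Finset.Icc 1 n, a k| ≤ n := fun n => by
    calc _ ≤ ∑ k ∈ Finset.Icc 1 n, |a k| := Finset.abs_sum_le_sum_abs _ _
      _ ≤ ∑ k ∈ Finset.Icc 1 n, (1:ℝ) := Finset.sum_le_sum fun k _ => ha k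
      _ = n := by simp
  have hmeas : Measurable (fun x : ℝ => ∑ k ∈ Finset.Icc 1 ⌊x⌋₊, a k) :=
    (measurable_from_nat (f := fun n => ∑ k ∈ Finset.Icc 1 n, a k)).comp Nat.measurable_floor
  have i1 : IntegrableOn (fun x : ℝ => (∑ k ∈ Finset.Icc 1 ⌊x⌋₊, a k) * x ^ (-s - 1)) (Ioi 1) := by
    refine Integrable.mono' (integrableOn_Ioi_rpow_of_lt (a := -s) (by linarith) one_pos)
      (by fun_prop) ?_
    filter_upwards [ae_restrict_mem measurableSet_Ioi] with x hx
    have hx0 : (0:ℝ) < x := lt_trans one_pos hx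
    rw [norm_mul, Real.norm_eq_abs, Real.norm_of_nonneg (by positivity)]
    calc _ ≤ x * x ^ (-s - 1) := by
          gcongr; exact (hbd _).trans (Nat.floor_le hx0.le)
      _ = x ^ (-s) := by rw [Real.rpow_sub_one hx0.ne']; field_simp
  have i2 : IntegrableOn (fun x : ℝ => K * x ^ (-s - 1)) (Ioi 1) :=
    (integrableOn_Ioi_rpow_of_lt (by linarith) one_pos).const_mul K
  refine ⟨?_, ?_⟩
  · rw [nuM_mem _ hB]
    simpa only [add_mul] using! i1.add i2
  rw [nuM_mgf _ hB]
  simp only [add_mul]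
  rw [integral_add i1 i2, integral_const_mul, integral_Ioi_rpow_of_lt (by linarith) one_pos]
  have key := LSeries_eq_mul_integral' (fun n => (a n : ℂ)) (r := 1) zero_le_one
    (s := (s:ℂ)) (by simpa using hs) (by
      refine Asymptotics.IsBigO.of_bound 1 (Eventually.of_forall fun n => ?_)
      simp only [Complex.norm_real, Real.rpow_one, one_mul]
      rw [Real.norm_of_nonneg (Finset.sum_nonneg fun _ _ => norm_nonneg _)]
      calc _ ≤ ∑ k ∈ Finset.Icc 1 n, (1:ℝ) := Finset.sum_le_sum fun k _ => ha k
        _ = ‖(n:ℝ)‖ := by simp)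
  have k1 : LSeries (fun n => (a n : ℂ)) (s:ℂ) = ((∑' n : ℕ, a n * (n:ℝ) ^ (-s) : ℝ) : ℂ) := by
    rw [LSeries, Complex.ofReal_tsum]
    refine tsum_congr fun n => ?_
    rcases eq_or_ne n 0 with rfl | hn
    · simp [LSeries.term, Real.zero_rpow (by linarith : -s ≠ 0)]
    · rw [LSeries.term_of_ne_zero hn, Complex.ofReal_mul, Complex.ofReal_cpow (by positivity)]
      push_cast
      rw [Complex.cpow_neg]; rfl
  have k2 : ∫ t in Ioi (1 : ℝ), (∑ k ∈ Finset.Icc 1 ⌊t⌋₊, (a k : ℂ)) * (t:ℂ) ^ (-((s:ℂ) + 1))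
      = ((∫ x in Ioi (1:ℝ), (∑ k ∈ Finset.Icc 1 ⌊x⌋₊, a k) * x ^ (-s - 1) : ℝ) : ℂ) := by
    rw [← integral_complex_ofReal]
    refine setIntegral_congr_fun measurableSet_Ioi fun x hx => ?_
    have hx0 : (0:ℝ) < x := lt_trans one_pos hx
    rw [Complex.ofReal_mul, Complex.ofReal_cpow hx0.le]
    push_cast
    ring_nf
  rw [k1, k2, ← Complex.ofReal_mul, Complex.ofReal_inj] at key
  rw [key, Real.one_rpow]
  have : s ≠ 0 := by linarith
  have : -s - 1 + 1 ≠ 0 := by simpa using this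
  field_simp
  ring

lemma R_analytic (f : ℕ → ℤ) (hfpm : ∀ n : ℕ, 1 ≤ n → f n = 1 ∨ f n = -1) (s : ℝ) (hs : 1/2 < s) :
    AnalyticAt ℝ (fun s : ℝ => (∑' p : Nat.Primes,
      (-Complex.log (1 - (f p : ℂ) * (p:ℂ) ^ (-(s:ℂ))) - (f p : ℂ) * (p:ℂ) ^ (-(s:ℂ)))).re) s := by
  obtain ⟨c, hc, hcs⟩ := exists_between hs
  have hnorm : ∀ (p : Nat.Primes) (w : ℂ), ‖(f p : ℂ) * (p:ℂ) ^ (-w)‖ = (p:ℝ) ^ (-w.re) := by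
    intro p w
    have : ‖(f p : ℂ)‖ = 1 := by
      rcases hfpm p p.2.one_le with h | h <;> simp [h]
    rw [norm_mul, this, one_mul, Complex.norm_natCast_cpow_of_pos p.2.pos]; simp
  have hle : ∀ (p : Nat.Primes) (w : ℂ), c < w.re → (p:ℝ) ^ (-w.re) ≤ (p:ℝ) ^ (-c) := fun p w hw =>
    Real.rpow_le_rpow_of_exponent_le (by exact_mod_cast p.2.one_le) (by linarith)
  have hq : ∀ (p : Nat.Primes), (p:ℝ) ^ (-c) ≤ (2:ℝ) ^ (-c) := fun p =>
    Real.rpow_le_rpow_of_nonpos two_pos (by exact_mod_cast p.2.two_le) (by linarith)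
  have h2 : (2:ℝ) ^ (-c) < 1 := Real.rpow_lt_one_of_one_lt_of_neg (by norm_num) (by linarith)
  have hU : IsOpen {w : ℂ | c < w.re} := isOpen_lt continuous_const Complex.continuous_re
  have hd : DifferentiableOn ℂ (fun w : ℂ => ∑' p : Nat.Primes,
      (-Complex.log (1 - (f p : ℂ) * (p:ℂ) ^ (-w)) - (f p : ℂ) * (p:ℂ) ^ (-w)))
      {w : ℂ | c < w.re} := by
    refine Complex.differentiableOn_tsum_of_summable_norm
      (u := fun p : Nat.Primes => (p:ℝ) ^ (-(2*c)) * ((1 - 2 ^ (-c))⁻¹ / 2)) ?_ ?_ hU ?_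
    · exact (Nat.Primes.summable_rpow.mpr (by linarith)).mul_right _
    · intro p w hw
      have hp0 : (p:ℂ) ≠ 0 := by exact_mod_cast p.2.ne_zero
      have hb := (hnorm p w).le.trans ((hle p w hw).trans (hq p))
      have hsl : 1 - (f p : ℂ) * (p:ℂ) ^ (-w) ∈ Complex.slitPlane := by
        rw [sub_eq_add_neg]
        apply Complex.mem_slitPlane_of_norm_lt_one
        rw [norm_neg]; linarith
      have hpow : DifferentiableAt ℂ (fun w : ℂ => (p:ℂ) ^ (-w)) w :=
        DifferentiableAt.const_cpow (by fun_prop) (Or.inl hp0)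
      refine DifferentiableAt.differentiableWithinAt ?_
      refine DifferentiableAt.sub (DifferentiableAt.neg (DifferentiableAt.clog ?_ hsl)) ?_ <;>
        fun_prop
    · intro p w hw
      have hb := (hnorm p w).le.trans ((hle p w hw).trans (hq p))
      have hz : ‖-((f p : ℂ) * (p:ℂ) ^ (-w))‖ < 1 := by rw [norm_neg]; linarith
      have := Complex.norm_log_one_add_sub_self_le hz
      rw [← norm_neg, norm_neg ((f p : ℂ) * (p:ℂ) ^ (-w)), ← sub_eq_add_neg] at this
      have e : -Complex.log (1 - (f p : ℂ) * (p:ℂ) ^ (-w)) - (f p : ℂ) * (p:ℂ) ^ (-w) =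
        -(Complex.log (1 - (f p : ℂ) * (p:ℂ) ^ (-w)) - -((f p : ℂ) * (p:ℂ) ^ (-w))) := by ring
      rw [e]
      refine this.trans ?_
      rw [mul_div_assoc]
      have e2 : (p:ℝ) ^ (-(2*c)) = ((p:ℝ) ^ (-c)) ^ 2 := by
        rw [← Real.rpow_mul_natCast (by positivity)]; congr 1; push_cast; ring
      rw [e2]
      have : 0 < 1 - (2:ℝ) ^ (-c) := by linarith
      have hb' := (hnorm p w).le.trans (hle p w hw)
      have : 0 < 1 - ‖(f p : ℂ) * (p:ℂ) ^ (-w)‖ := by linarith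
      gcongr
  exact (hd.analyticAt (hU.mem_nhds (by simpa using hcs))).re_ofReal

lemma core_contra (B : ℕ → ℝ) (hB : ∀ n, 0 ≤ B n) (hBt : Tendsto B atTop atTop) (σ : ℝ)
    (hσ : 1/2 < σ) (F R : ℝ → ℝ) (hF : AnalyticOnNhd ℝ F (Ioi 0))
    (hR : AnalyticOnNhd ℝ R (Ioi (1/2))) (K : ℝ)
    (hI0 : ∀ u < -1, u ∈ integrableExpSet Real.log (nuM B))
    (hE : ∀ s > 3, F s = Real.exp ((s - σ) * mgf Real.log (nuM B) (σ - s) - K + R s)) : False := by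
  set I := integrableExpSet Real.log (nuM B) with hI
  have ext : ∀ b ≤ 0, (∀ u < b, u ∈ I) → ∀ s > σ - b,
      F s = Real.exp ((s - σ) * mgf Real.log (nuM B) (σ - s) - K + R s) := by
    intro b hb hbI
    have hG : AnalyticOnNhd ℝ
        (fun s => Real.exp ((s - σ) * mgf Real.log (nuM B) (σ - s) - K + R s)) (Ioi (σ - b)) := by
      intro s hs
      have hs' : σ - b < s := hs
      have hm : AnalyticAt ℝ (mgf Real.log (nuM B)) (σ - s) :=
        analyticAt_mgf (mem_interior.mpr ⟨Iio b, fun v hv => hbI v hv, isOpen_Iio,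
          by simp only [mem_Iio]; linarith⟩)
      have hm' : AnalyticAt ℝ (fun s => mgf Real.log (nuM B) (σ - s)) s :=
        AnalyticAt.fun_comp (f := fun s => σ - s) hm (by fun_prop)
      have hr : AnalyticAt ℝ R s := hR s (by simp only [mem_Ioi]; linarith)
      fun_prop
    have hF' : AnalyticOnNhd ℝ F (Ioi (σ - b)) := fun s hs => hF s (by
      have : σ - b < s := hs
      simp only [mem_Ioi]; linarith)
    intro s hs
    refine hF'.eqOn_of_preconnected_of_eventuallyEq hG isPreconnected_Ioi
      (z₀ := max (σ - b) 3 + 1) ?_ ?_ hs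
    · have := le_max_left (σ - b) 3
      simp only [mem_Ioi]; linarith
    · have := le_max_right (σ - b) 3
      filter_upwards [Ioi_mem_nhds (show (3:ℝ) < max (σ - b) 3 + 1 by linarith)] with z hz
      exact hE z hz
  have step1 : ∀ u < 0, u ∈ I := by
    by_contra! hcon
    obtain ⟨u0, hu0, hu0I⟩ := hcon
    have hne : I.Nonempty := ⟨-2, hI0 _ (by norm_num)⟩
    have hub : u0 ∈ upperBounds I := by
      intro v hv
      by_contra! h
      exact hu0I (nuM_down B h.le hv)
    have hbdd : BddAbove I := ⟨u0, hub⟩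
    set b := sSup I with hb
    have hb0 : b < 0 := lt_of_le_of_lt (csSup_le hne hub) hu0
    have hbI : ∀ u < b, u ∈ I := fun u hu => by
      obtain ⟨v, hv, huv⟩ := exists_lt_of_lt_csSup hne hu
      exact nuM_down B huv.le hv
    have hx := ext b hb0.le hbI
    have hFa : AnalyticAt ℝ F (σ - b) := hF _ (by simp only [mem_Ioi]; linarith)
    have hRa : AnalyticAt ℝ R (σ - b) := hR _ (by simp only [mem_Ioi]; linarith)
    have hpos : 0 < F (σ - b) := by
      have hev : ∀ᶠ s in 𝓝[>] (σ - b), Real.exp (-K + (R (σ - b) - 1)) ≤ F s := by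
        have h1 : ∀ᶠ s in 𝓝[>] (σ - b), R (σ - b) - 1 < R s :=
          (hRa.continuousAt.eventually (lt_mem_nhds (by linarith))).filter_mono nhdsWithin_le_nhds
        filter_upwards [h1, self_mem_nhdsWithin] with s hs1 hs2
        have hs2' : σ - b < s := hs2
        rw [hx s hs2]
        have : 0 ≤ (s - σ) * mgf Real.log (nuM B) (σ - s) :=
          mul_nonneg (by linarith) mgf_nonneg
        gcongr
        linarith
      exact lt_of_lt_of_le (Real.exp_pos _)
        (ge_of_tendsto (hFa.continuousAt.tendsto.mono_left nhdsWithin_le_nhds) hev)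
    obtain ⟨v, hv, hvI⟩ := landau_mgf (nuM_nonneg B) b hbI
      (fun u => (Real.log (F (σ - u)) - R (σ - u) + K) / (-u)) (by
        have h1 : AnalyticAt ℝ (fun u => F (σ - u)) b :=
          AnalyticAt.fun_comp (f := fun s => σ - s) hFa (by fun_prop)
        have h2 : AnalyticAt ℝ (fun u => R (σ - u)) b :=
          AnalyticAt.fun_comp (f := fun s => σ - s) hRa (by fun_prop)
        have h3 : AnalyticAt ℝ (fun u => Real.log (F (σ - u))) b := h1.log hpos
        exact ((h3.sub h2).add analyticAt_const).div (analyticAt_id.neg) (by simpa using hb0.ne))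
      (by
        intro u hu
        have hu0 : u ≠ 0 := by linarith
        rw [hx (σ - u) (by linarith), Real.log_exp]
        have e1 : σ - (σ - u) = u := by ring
        have e2 : σ - u - σ = -u := by ring
        rw [e1, e2]
        field_simp
        ring)
    exact absurd (le_csSup hbdd hvI) (not_le.mpr hv)
  have hx := ext 0 le_rfl step1
  have hFa : AnalyticAt ℝ F σ := hF _ (by simp only [mem_Ioi]; linarith)
  have hRa : AnalyticAt ℝ R σ := hR _ (by simp only [mem_Ioi]; linarith)
  obtain ⟨M0, hM0⟩ : ∃ M0, ∀ᶠ s in 𝓝[>] σ, (s - σ) * mgf Real.log (nuM B) (σ - s) ≤ M0 := by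
    refine ⟨Real.log (|F σ| + 1) + K - (R σ - 1), ?_⟩
    have h1 : ∀ᶠ s in 𝓝[>] σ, R σ - 1 < R s :=
      (hRa.continuousAt.eventually (lt_mem_nhds (by linarith))).filter_mono nhdsWithin_le_nhds
    have h2 : ∀ᶠ s in 𝓝[>] σ, F s < |F σ| + 1 :=
      (hFa.continuousAt.eventually (gt_mem_nhds (by linarith [le_abs_self (F σ)]))).filter_mono
        nhdsWithin_le_nhds
    filter_upwards [h1, h2, self_mem_nhdsWithin] with s hs1 hs2 hs3
    have hs3' : σ < s := hs3
    rw [hx s (by linarith)] at hs2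
    have := (Real.lt_log_iff_exp_lt (by positivity)).mpr hs2
    linarith
  obtain ⟨N, hN1, hN⟩ : ∃ N : ℕ, 1 ≤ N ∧ ∀ n ≥ N, M0 + 1 ≤ B n := by
    obtain ⟨N, hN⟩ := eventually_atTop.mp (hBt.eventually_ge_atTop (M0 + 1))
    exact ⟨max N 1, le_max_right _ _, fun n hn => hN n (le_trans (le_max_left _ _) hn)⟩
  have hNr : (1:ℝ) ≤ N := by exact_mod_cast hN1
  have hN0 : (0:ℝ) < N := by linarith
  have hlow : ∀ s > σ, (M0 + 1) * (N:ℝ) ^ (σ - s) ≤ (s - σ) * mgf Real.log (nuM B) (σ - s) := by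
    intro s hs
    have hi := (nuM_mem B hB (σ - s)).mp (step1 _ (by linarith))
    have hi2 : IntegrableOn (fun x : ℝ => (M0 + 1) * x ^ (σ - s - 1)) (Ioi N) :=
      (integrableOn_Ioi_rpow_of_lt (by linarith) hN0).const_mul _
    have hsub : Ioi (N:ℝ) ⊆ Ioi 1 := Ioi_subset_Ioi hNr
    have h1 : ∫ x in Ioi (N:ℝ), (M0 + 1) * x ^ (σ - s - 1) ≤ mgf Real.log (nuM B) (σ - s) := by
      rw [nuM_mgf B hB]
      refine (setIntegral_mono_on hi2 (hi.mono_set hsub) measurableSet_Ioi ?_).trans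
        (setIntegral_mono_set hi ?_ hsub.eventuallyLE)
      · intro x hx
        have hx' : (N:ℝ) < x := hx
        have : 0 < x := by linarith
        gcongr
        exact hN _ (Nat.le_floor hx'.le)
      · filter_upwards [ae_restrict_mem measurableSet_Ioi] with x hx
        have hx' : (1:ℝ) < x := hx
        have := hB ⌊x⌋₊
        simp only [Pi.zero_apply]; positivity
    rw [integral_const_mul, integral_Ioi_rpow_of_lt (by linarith) hN0] at h1
    have hs0 : 0 < s - σ := by linarith
    have := mul_le_mul_of_nonneg_left h1 hs0.le
    refine le_trans (le_of_eq ?_) this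
    have e : σ - s - 1 + 1 = -(s - σ) := by ring
    have e2 : σ - s = -(s - σ) := by ring
    rw [e, e2, neg_div_neg_eq]
    field_simp
  have htend : Tendsto (fun s => (M0 + 1) * (N:ℝ) ^ (σ - s)) (𝓝[>] σ) (𝓝 (M0 + 1)) := by
    have hc : ContinuousAt (fun s => (M0 + 1) * (N:ℝ) ^ (σ - s)) σ := by
      refine ContinuousAt.mul continuousAt_const ?_
      exact ContinuousAt.rpow continuousAt_const (by fun_prop) (Or.inl hN0.ne')
    have := hc.tendsto.mono_left (nhdsWithin_le_nhds (s := Ioi σ))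
    simpa using this
  have := le_of_tendsto htend (b := M0) (by
    filter_upwards [hM0, self_mem_nhdsWithin] with s hs1 hs2
    exact (hlow s hs2).trans hs1)
  linarith

lemma euler_id (f : ℕ → ℤ) (hf1 : f 1 = 1) (hfmul : ∀ a b : ℕ, f (a * b) = f a * f b)
    (hfpm : ∀ n : ℕ, 1 ≤ n → f n = 1 ∨ f n = -1) (s : ℝ) (hs : 1 < s) :
    ∑' n : ℕ, (f n : ℝ) * (n:ℝ) ^ (-s) = Real.exp (∑' p : Nat.Primes, (f p : ℝ) * (p:ℝ) ^ (-s) +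
      (∑' p : Nat.Primes,
      (-Complex.log (1 - (f p : ℂ) * (p:ℂ) ^ (-(s:ℂ))) - (f p : ℂ) * (p:ℂ) ^ (-(s:ℂ)))).re) := by
  have hs0 : -(s:ℂ) ≠ 0 := by
    rw [neg_ne_zero]; exact_mod_cast (by linarith : s ≠ 0)
  let g : ℕ →*₀ ℂ :=
    { toFun := fun n => (f n : ℂ) * (n:ℂ) ^ (-(s:ℂ))
      map_zero' := by rw [Nat.cast_zero, Complex.zero_cpow hs0, mul_zero]
      map_one' := by simp [hf1]
      map_mul' := fun m n => by
        rw [hfmul, Nat.cast_mul, Complex.natCast_mul_natCast_cpow]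
        push_cast; ring }
  have hg : ∀ n, g n = (f n : ℂ) * (n:ℂ) ^ (-(s:ℂ)) := fun n => rfl
  have hgr : ∀ n, g n = (((f n : ℝ) * (n:ℝ) ^ (-s) : ℝ) : ℂ) := fun n => by
    rw [hg, Complex.ofReal_mul, Complex.ofReal_cpow (by positivity)]; push_cast; rfl
  have hsum : Summable (‖g ·‖) := by
    refine Summable.of_nonneg_of_le (fun _ => norm_nonneg _) (fun n => ?_)
      (Real.summable_nat_rpow.mpr (by linarith : -s < -1))
    rcases Nat.eq_zero_or_pos n with rfl | hn
    · rw [map_zero, norm_zero]; positivity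
    · rw [hgr, Complex.norm_real, norm_mul, Real.norm_of_nonneg (by positivity : 0 ≤ (n:ℝ) ^ (-s))]
      rcases hfpm n hn with h | h <;> simp [h]
  have key := EulerProduct.exp_tsum_primes_log_eq_tsum hsum
  have hlt : ∀ p : Nat.Primes, (f p : ℝ) * (p:ℝ) ^ (-s) < 1 := by
    intro p
    have : (p:ℝ) ^ (-s) < 1 := Real.rpow_lt_one_of_one_lt_of_neg
      (by exact_mod_cast p.2.one_lt) (by linarith)
    have h0 : 0 ≤ (p:ℝ) ^ (-s) := by positivity
    rcases hfpm p p.2.one_le with h | h <;> simp only [h] <;> push_cast <;> linarith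
  have hz : ∑' p : Nat.Primes, -Complex.log (1 - g p) =
      ((∑' p : Nat.Primes, -Real.log (1 - (f p : ℝ) * (p:ℝ) ^ (-s)) : ℝ) : ℂ) := by
    rw [Complex.ofReal_tsum]
    refine tsum_congr fun p => ?_
    rw [hgr, Complex.ofReal_neg, Complex.ofReal_log (by linarith [hlt p])]
    push_cast; rfl
  have hgs : Summable (fun p : Nat.Primes => g p) := hsum.of_norm.subtype Nat.Prime
  have hls : Summable (fun p : Nat.Primes => -Complex.log (1 - g p)) :=
    hsum.of_norm.clog_one_sub.neg.subtype Nat.Prime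
  have h1 : ∑' p : Nat.Primes, -Complex.log (1 - g p) =
      ((∑' p : Nat.Primes, (f p : ℝ) * (p:ℝ) ^ (-s) : ℝ) : ℂ) +
      ∑' p : Nat.Primes, (-Complex.log (1 - g p) - g p) := by
    rw [Summable.tsum_sub hls hgs, Complex.ofReal_tsum, tsum_congr (fun p : Nat.Primes => hgr p)]
    ring
  have h2 := congrArg Complex.re h1
  rw [hz, Complex.add_re, Complex.ofReal_re, Complex.ofReal_re] at h2
  rw [hz, tsum_congr hgr, ← Complex.ofReal_tsum, ← Complex.ofReal_exp, Complex.ofReal_inj] at key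
  rw [← key, h2]
  rfl

/-- If `f` is completely multiplicative with values in `{-1, 1}`, `1/2 < σ ≤ 1`, and
`∑_{p ≤ x} f p / p^σ → ∞`, then the partial sums of `f` are unbounded. -/
theorem stmt_17 (f : ℕ → ℤ)
    (hf1 : f 1 = 1)
    (hfmul : ∀ a b : ℕ, f (a * b) = f a * f b)
    (hfpm : ∀ n : ℕ, 1 ≤ n → f n = 1 ∨ f n = -1)
    (σ : ℝ) (hσ : σ ∈ Set.Ioc (1 / 2 : ℝ) 1)
    (hdiv : Filter.Tendsto (fun N : ℕ => ∑ p ∈ N.primesBelow, (f p : ℝ) / (p : ℝ) ^ σ)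
      Filter.atTop Filter.atTop) :
    ∀ C : ℝ, ∃ N : ℕ, C < |((∑ n ∈ Finset.Icc 1 N, f n : ℤ) : ℝ)| := by
  by_contra! hcon
  obtain ⟨C, hC⟩ := hcon
  obtain ⟨hσ1, hσ2⟩ := hσ
  have hf1' : ∀ n, |(f n : ℝ)| ≤ 1 := by
    intro n
    rcases Nat.eq_zero_or_pos n with rfl | hn
    · have h := hfmul 0 0
      rw [mul_zero] at h
      have : f 0 = 0 ∨ f 0 = 1 := by
        rcases eq_or_ne (f 0) 0 with h0 | h0
        · exact Or.inl h0
        · exact Or.inr (mul_left_cancel₀ h0 (by rw [mul_one]; exact h.symm))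
      rcases this with h | h <;> simp [h]
    · rcases hfpm n hn with h | h <;> simp [h]
  -- the function F
  have hS : ∀ n, |∑ k ∈ Finset.Icc 1 n, (f k : ℝ)| ≤ C := by
    intro n; have := hC n; push_cast at this; exact this
  have hSB : ∀ n, 0 ≤ ∑ k ∈ Finset.Icc 1 n, (f k : ℝ) + C := fun n => by
    linarith [neg_le_of_abs_le (hS n)]
  set BF : ℕ → ℝ := fun n => ∑ k ∈ Finset.Icc 1 n, (f k : ℝ) + C with hBF
  have hFI : ∀ u < 0, u ∈ integrableExpSet Real.log (nuM BF) := by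
    intro u hu
    rw [nuM_mem _ hSB]
    have hmeas : Measurable (fun x : ℝ => BF ⌊x⌋₊) :=
      (measurable_from_nat (f := BF)).comp Nat.measurable_floor
    refine Integrable.mono' ((integrableOn_Ioi_rpow_of_lt (a := u - 1) (by linarith)
      one_pos).const_mul (2 * C)) (by fun_prop) ?_
    filter_upwards [ae_restrict_mem measurableSet_Ioi] with x hx
    have hx0 : (0:ℝ) < x := lt_trans one_pos hx
    rw [Real.norm_of_nonneg (mul_nonneg (hSB _) (by positivity))]
    gcongr
    have h2 : BF ⌊x⌋₊ = ∑ k ∈ Finset.Icc 1 ⌊x⌋₊, (f k : ℝ) + C := rfl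
    linarith [le_of_abs_le (hS ⌊x⌋₊)]
  have hFan : AnalyticOnNhd ℝ (fun s => s * mgf Real.log (nuM BF) (-s) - C) (Ioi 0) := by
    intro s hs
    have hs' : 0 < s := hs
    have hm : AnalyticAt ℝ (mgf Real.log (nuM BF)) (-s) :=
      analyticAt_mgf (mem_interior.mpr ⟨Iio 0, fun v hv => hFI v hv, isOpen_Iio,
        by simp only [mem_Iio]; linarith⟩)
    have hm' : AnalyticAt ℝ (fun s => mgf Real.log (nuM BF) (-s)) s :=
      AnalyticAt.fun_comp (f := fun s => -s) hm (by fun_prop)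
    fun_prop
  -- the prime sum
  set a : ℕ → ℝ := fun n => if n.Prime then (f n : ℝ) / (n:ℝ) ^ σ else 0 with ha
  have ha1 : ∀ n, |a n| ≤ 1 := by
    intro n
    simp only [ha]
    split_ifs with hp
    · have : 1 ≤ (n:ℝ) ^ σ := Real.one_le_rpow (by exact_mod_cast hp.one_le) (by linarith)
      rw [abs_div, abs_of_pos (by linarith : 0 < (n:ℝ) ^ σ), div_le_one (by linarith)]
      exact (hf1' n).trans this
    · simp
  have hA : ∀ n : ℕ, ∑ k ∈ Finset.Icc 1 n, a k =
      ∑ p ∈ (n+1).primesBelow, (f p : ℝ) / (p : ℝ) ^ σ := by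
    intro n
    rw [Nat.primesBelow, Finset.sum_filter]
    refine Finset.sum_subset (fun k hk => ?_) (fun k hk hk' => ?_)
    · simp only [Finset.mem_Icc] at hk; simp only [Finset.mem_range]; omega
    · simp only [Finset.mem_Icc, Finset.mem_range] at hk hk'
      have : k = 0 := by omega
      simp [this, ha, Nat.not_prime_zero]
  have hAt : Tendsto (fun n => ∑ k ∈ Finset.Icc 1 n, a k) atTop atTop := by
    simp_rw [hA]
    exact hdiv.comp (tendsto_add_atTop_nat 1)
  obtain ⟨K, hK⟩ : ∃ K : ℝ, ∀ n, 0 ≤ ∑ k ∈ Finset.Icc 1 n, a k + K := by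
    obtain ⟨m, hm⟩ := (show Tendsto _ cofinite atTop from Nat.cofinite_eq_atTop ▸ hAt).exists_forall_le
    exact ⟨-∑ k ∈ Finset.Icc 1 m, a k, fun n => by linarith [hm n]⟩
  refine core_contra (fun n => ∑ k ∈ Finset.Icc 1 n, a k + K) hK
    (tendsto_atTop_add_const_right _ _ hAt) σ hσ1 _ _ hFan
    (fun s hs => R_analytic f hfpm s hs) K ?_ ?_
  · intro u hu
    have := (nuM_abel a ha1 K hK (-u) (by linarith)).1
    rwa [neg_neg] at this
  · intro s hs
    have h1 := (nuM_abel a ha1 K hK (s - σ) (by linarith)).2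
    have h2 := (nuM_abel (fun n => (f n : ℝ)) hf1' C hSB s (by linarith)).2
    rw [neg_sub] at h1
    rw [← h1, ← h2, euler_id f hf1 hfmul hfpm s (by linarith)]
    congr 2
    have e := tsum_subtype {p : ℕ | p.Prime} (fun n : ℕ => (f n : ℝ) * (n:ℝ) ^ (-s))
    refine Eq.trans e (tsum_congr fun n => ?_)
    by_cases hp : n.Prime
    · have hn : (0:ℝ) < n := by exact_mod_cast hp.pos
      rw [indicator_of_mem (by exact hp)]
      simp only [ha, if_pos hp]
      rw [Real.rpow_sub hn, Real.rpow_neg hn.le]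
      have := (Real.rpow_pos_of_pos hn σ).ne'
      field_simp
    · rw [indicator_of_notMem (by exact hp)]
      simp [ha, hp]
end

section
/- Let f : ℕ → ℤ be a completely multiplicative function taking values in {-1, 1}, and let σ be a real number with 1/2 < σ ≤ 1. If ∑_{p ≤ x} f(p)/p^σ → -∞ as x → ∞ (the sum over primes p), then the partial sums of μ·f are unbounded: lim sup_{N→∞} |∑_{n=1}^{N} μ(n) f(n)| = ∞, where μ is the Möbius function. -/
open MeasureTheory ProbabilityTheory Filter Topology Set in
lemma landau_aux (μ : Measure ℝ) (hpos : ∀ᵐ u ∂μ, 0 ≤ u) (T : ℝ)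
    (hS : Ioi T ⊆ integrableExpSet (fun u : ℝ => -u) μ) (G : ℝ → ℝ) (hG : AnalyticAt ℝ G T)
    (hGe : ∀ w, T < w → G w = mgf (fun u : ℝ => -u) μ w) :
    ∃ w, w < T ∧ w ∈ integrableExpSet (fun u : ℝ => -u) μ := by
  obtain ⟨p, r, hp⟩ := hG
  obtain ⟨ρ, hρ0, hρ⟩ := ENNReal.lt_iff_exists_nnreal_btwn.1 hp.r_pos
  have hρpos : (0:ℝ) < ρ := by exact_mod_cast hρ0
  set t : ℝ := T + ρ / 4 with ht
  have hn : (‖(ρ / 4 : ℝ)‖₊ : ENNReal) < r := by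
    refine lt_of_le_of_lt ?_ hρ
    rw [ENNReal.coe_le_coe, ← NNReal.coe_le_coe]
    simp only [coe_nnnorm, Real.norm_eq_abs]
    rw [abs_of_nonneg (by positivity)]; linarith
  have hq := hp.changeOrigin hn
  set q := p.changeOrigin (ρ / 4 : ℝ)
  have hmem : (-(ρ / 2) : ℝ) ∈ Metric.eball (0:ℝ) (r - ‖(ρ / 4 : ℝ)‖₊) := by
    rw [Metric.mem_eball, edist_zero_right, lt_tsub_iff_right]
    refine lt_of_le_of_lt ?_ hρ
    rw [enorm_eq_nnnorm, ← ENNReal.coe_add, ENNReal.coe_le_coe, ← NNReal.coe_le_coe]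
    simp only [coe_nnnorm, Real.norm_eq_abs, NNReal.coe_add]
    rw [abs_neg, abs_of_nonneg (show (0:ℝ) ≤ ρ / 2 by positivity), abs_of_nonneg (show (0:ℝ) ≤ ρ / 4 by positivity)]
    linarith
  have hsum := (hq.hasSum hmem).summable
  have htint : t ∈ interior (integrableExpSet (fun u : ℝ => -u) μ) :=
    interior_maximal hS isOpen_Ioi (by rw [Set.mem_Ioi, ht]; linarith)
  have hev : G =ᶠ[𝓝 t] mgf (fun u : ℝ => -u) μ := by
    filter_upwards [Ioi_mem_nhds (show T < t by rw [ht]; linarith)] with w hw using hGe w hw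
  let F : ℕ → ℝ → ℝ := fun n u => ((ρ / 2 : ℝ) * u) ^ n / (n.factorial : ℝ) * Real.exp (t * (-u))
  have hFeq : ∀ n u, F n u = ((-(ρ / 2 : ℝ)) ^ n / (n.factorial : ℝ)) * ((-u) ^ n * Real.exp (t * (-u))) := by
    intro n u
    simp only [F]
    rw [show (ρ / 2 : ℝ) * u = (-(ρ / 2 : ℝ)) * (-u) by ring, mul_pow]
    ring
  have hterm : ∀ n, q n (fun _ => -(ρ / 2 : ℝ)) = ∫ u, F n u ∂μ := by
    intro n
    have h1 := hq.factorial_smul (-(ρ / 2 : ℝ)) n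
    rw [(hev.iteratedFDeriv ℝ n).eq_of_nhds] at h1
    rw [iteratedFDeriv_apply_eq_iteratedDeriv_mul_prod, iteratedDeriv_mgf htint] at h1
    simp_rw [hFeq]
    rw [integral_const_mul]
    have hfac : (n.factorial : ℝ) ≠ 0 := by positivity
    simp only [nsmul_eq_mul, Finset.prod_const, Finset.card_univ, Fintype.card_fin, smul_eq_mul] at h1
    rw [div_mul_eq_mul_div, eq_div_iff hfac, mul_comm, h1]
  have hFint : ∀ n, Integrable (F n) μ := by
    intro n
    have := (integrable_pow_mul_exp_of_mem_interior_integrableExpSet htint n).const_mul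
      ((-(ρ / 2 : ℝ)) ^ n / (n.factorial : ℝ))
    refine this.congr (ae_of_all _ fun u => (hFeq n u).symm)
  simp_rw [hterm] at hsum
  refine ⟨T - ρ / 4, by linarith, ?_⟩
  have hF0 : ∀ n, 0 ≤ᵐ[μ] F n := by
    intro n
    filter_upwards [hpos] with u hu
    simp only [F, Pi.zero_apply]; positivity
  have hlim : ∀ᵐ u ∂μ, ENNReal.ofReal (Real.exp ((T - ρ / 4) * (-u))) = ∑' n, ENNReal.ofReal (F n u) := by
    have := ae_all_iff.2 hF0
    filter_upwards [this] with u hu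
    have hs : HasSum (fun n => F n u) (Real.exp ((ρ / 2 : ℝ) * u) * Real.exp (t * (-u))) := by
      have := NormedSpace.expSeries_div_hasSum_exp ((ρ / 2 : ℝ) * u)
      rw [← Real.exp_eq_exp_ℝ] at this
      exact this.mul_right _
    rw [← ENNReal.ofReal_tsum_of_nonneg (fun n => hu n) hs.summable, hs.tsum_eq, ← Real.exp_add]
    congr 2
    rw [ht]; ring
  refine ⟨by fun_prop, ?_⟩
  rw [hasFiniteIntegral_iff_ofReal (ae_of_all _ fun u => (Real.exp_pos _).le), lintegral_congr_ae hlim,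
    lintegral_tsum (fun n => (hFint n).1.aemeasurable.ennreal_ofReal)]
  simp_rw [← ofReal_integral_eq_lintegral_ofReal (hFint _) (hF0 _)]
  rw [← ENNReal.ofReal_tsum_of_nonneg (fun n => integral_nonneg_of_ae (hF0 n)) hsum]
  exact ENNReal.ofReal_lt_top

/-- counting-type step function -/
noncomputable def stepF (a : ℕ → ℝ) (K u : ℝ) : ℝ := K - ∑ n ∈ Finset.range (⌊Real.exp u⌋₊ + 1), a n

open MeasureTheory in
noncomputable def stepM (a : ℕ → ℝ) (K : ℝ) : Measure ℝ :=
  (volume.restrict (Set.Ici 0)).withDensity (fun u => ENNReal.ofReal (stepF a K u))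

lemma stepF_meas (a : ℕ → ℝ) (K : ℝ) : Measurable (stepF a K) := by
  have : stepF a K = (fun n : ℕ => K - ∑ n ∈ Finset.range (n + 1), a n) ∘ (fun u => ⌊Real.exp u⌋₊) := rfl
  rw [this]
  exact (measurable_from_nat).comp (Nat.measurable_floor.comp Real.measurable_exp)

open MeasureTheory ProbabilityTheory in
lemma stepM_int (a : ℕ → ℝ) (K : ℝ) (h0 : ∀ u, 0 ≤ stepF a K u) (w : ℝ) :
    w ∈ integrableExpSet (fun u : ℝ => -u) (stepM a K) ↔
      IntegrableOn (fun u => stepF a K u * Real.exp (w * (-u))) (Set.Ici 0) := by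
  unfold integrableExpSet stepM
  rw [Set.mem_ofPred_eq, integrable_withDensity_iff_integrable_smul' (by exact (stepF_meas a K).ennreal_ofReal) (by simp)]
  simp [ENNReal.toReal_ofReal (h0 _), IntegrableOn]

open MeasureTheory ProbabilityTheory in
lemma stepM_mgf (a : ℕ → ℝ) (K : ℝ) (h0 : ∀ u, 0 ≤ stepF a K u) (w : ℝ) :
    mgf (fun u : ℝ => -u) (stepM a K) w =
      ∫ u in Set.Ici 0, stepF a K u * Real.exp (w * (-u)) := by
  unfold mgf stepM
  rw [integral_withDensity_eq_integral_toReal_smul (by exact (stepF_meas a K).ennreal_ofReal) (by simp)]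
  simp [ENNReal.toReal_ofReal (h0 _)]

open MeasureTheory in
lemma stepM_pos (a : ℕ → ℝ) (K : ℝ) : ∀ᵐ u ∂(stepM a K), 0 ≤ u := by
  have : stepM a K ≪ volume.restrict (Set.Ici 0) := withDensity_absolutelyContinuous _ _
  exact this.ae_le (ae_restrict_mem measurableSet_Ici)

open MeasureTheory in
lemma expInt {w : ℝ} (hw : 0 < w) (c : ℝ) : IntegrableOn (fun u => Real.exp (w * (-u))) (Set.Ici c) ∧
   ∫ u in Set.Ici c, Real.exp (w * (-u)) = Real.exp (-w * c) / w := by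
  have h1 := integrableOn_exp_mul_Ioi (a := -w) (by linarith) c
  have h2 := integral_exp_mul_Ioi (a := -w) (by linarith) c
  rw [← integrableOn_Ici_iff_integrableOn_Ioi] at h1
  rw [← integral_Ici_eq_integral_Ioi] at h2
  simp only [mul_neg, ← neg_mul] at *
  refine ⟨h1, ?_⟩
  rw [h2, neg_div_neg_eq]

open MeasureTheory in
lemma abel_aux (a : ℕ → ℝ) (K : ℝ) (ha0 : a 0 = 0) (ha : ∀ n, |a n| ≤ 1) {w : ℝ} (hw : 1 < w) :
    IntegrableOn (fun u => stepF a K u * Real.exp (w * (-u))) (Set.Ici 0) ∧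
    ∫ u in Set.Ici 0, stepF a K u * Real.exp (w * (-u)) = (K - ∑' n, a n * (n:ℝ) ^ (-w)) / w := by
  have hw0 : 0 < w := by linarith
  let F : ℕ → ℝ → ℝ := fun n u => a n * (Set.Ici (Real.log n)).indicator (fun u => Real.exp (w * (-u))) u
  have hlog : ∀ n : ℕ, 0 ≤ Real.log n := fun n => Real.log_natCast_nonneg n
  have hsub : ∀ n : ℕ, Set.Ici (Real.log n) ∩ Set.Ici 0 = Set.Ici (Real.log n) := fun n =>
    Set.inter_eq_left.2 (Set.Ici_subset_Ici.2 (hlog n))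
  have hFint : ∀ n, Integrable (F n) (volume.restrict (Set.Ici 0)) := by
    intro n
    refine Integrable.const_mul ?_ _
    rw [integrable_indicator_iff measurableSet_Ici, IntegrableOn, Measure.restrict_restrict measurableSet_Ici, hsub]
    exact (expInt hw0 _).1
  have hind : ∀ n : ℕ, n ≠ 0 → ∫ u in Set.Ici 0, (Set.Ici (Real.log n)).indicator (fun u => Real.exp (w * (-u))) u
      = (n:ℝ) ^ (-w) / w := by
    intro n hn
    rw [integral_indicator measurableSet_Ici, Measure.restrict_restrict measurableSet_Ici, hsub, (expInt hw0 _).2,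
      Real.rpow_def_of_pos (by positivity), mul_comm]
  have hFv : ∀ n, ∫ u in Set.Ici 0, F n u = a n * (n:ℝ) ^ (-w) / w := by
    intro n
    simp only [F]
    rw [integral_const_mul]
    rcases eq_or_ne n 0 with rfl | hn
    · simp [ha0]
    · rw [hind n hn]; ring
  have hFn : ∀ n, ∫ u in Set.Ici 0, ‖F n u‖ = |a n| * (n:ℝ) ^ (-w) / w := by
    intro n
    have : ∀ u, ‖F n u‖ = |a n| * (Set.Ici (Real.log n)).indicator (fun u => Real.exp (w * (-u))) u := by
      intro u
      simp only [F]
      rw [norm_mul, Real.norm_eq_abs, Real.norm_of_nonneg (Set.indicator_nonneg (fun _ _ => (Real.exp_pos _).le) _)]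
    simp_rw [this]
    rw [integral_const_mul]
    rcases eq_or_ne n 0 with rfl | hn
    · simp [ha0]
    · rw [hind n hn]; ring
  have hsm : Summable fun n => ∫ u in Set.Ici 0, ‖F n u‖ := by
    simp_rw [hFn]
    refine Summable.div_const ?_ _
    refine Summable.of_nonneg_of_le (fun n => by positivity) (fun n => ?_) (Real.summable_nat_rpow.2 (show -w < -1 by linarith))
    exact mul_le_of_le_one_left (by positivity) (ha n)
  have hkey := hasSum_integral_of_summable_integral_norm hFint hsm
  have hpt : ∀ u, ∑' n, F n u = (∑ n ∈ Finset.range (⌊Real.exp u⌋₊ + 1), a n) * Real.exp (w * (-u)) := by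
    intro u
    rw [tsum_eq_sum (s := Finset.range (⌊Real.exp u⌋₊ + 1)), Finset.sum_mul]
    · refine Finset.sum_congr rfl fun n hn => ?_
      rcases eq_or_ne n 0 with rfl | hn0
      · simp [F, ha0]
      simp only [F]
      rw [Set.indicator_of_mem]
      have : n ≤ ⌊Real.exp u⌋₊ := by simpa [Nat.lt_succ_iff] using hn
      rw [Nat.le_floor_iff (Real.exp_pos _).le] at this
      exact (Real.log_le_iff_le_exp (by positivity)).2 this
    · intro n hn
      have hn' : ¬ n ≤ ⌊Real.exp u⌋₊ := by simpa [Nat.lt_succ_iff] using hn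
      have hn0 : n ≠ 0 := by rintro rfl; simp at hn'
      rw [Nat.le_floor_iff (Real.exp_pos _).le] at hn'
      simp only [F]
      rw [Set.indicator_of_notMem, mul_zero]
      intro h
      exact hn' ((Real.log_le_iff_le_exp (by positivity)).1 h)
  have hI2 : IntegrableOn (fun u => ∑' n, F n u) (Set.Ici 0) := by
    have hb : IntegrableOn (fun u => 2 * Real.exp ((w - 1) * (-u))) (Set.Ici 0) :=
      (expInt (w := w - 1) (by linarith) 0).1.const_mul 2
    refine Integrable.mono' hb ?_ ?_
    · have hm := stepF_meas (fun n => - a n) 0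
      refine Measurable.aestronglyMeasurable ?_
      have : (fun u => ∑' n, F n u) = fun u => stepF (fun n => - a n) 0 u * Real.exp (w * (-u)) := by
        ext u; rw [hpt, stepF]; simp
      rw [this]
      exact hm.mul (by fun_prop)
    · filter_upwards [ae_restrict_mem measurableSet_Ici] with u hu
      rw [hpt, norm_mul, Real.norm_of_nonneg (Real.exp_pos _).le]
      have h1 : ‖∑ n ∈ Finset.range (⌊Real.exp u⌋₊ + 1), a n‖ ≤ 2 * Real.exp u := by
        refine (norm_sum_le_of_le _ (fun n _ => ha n)).trans ?_
        simp only [Finset.sum_const, Finset.card_range, nsmul_eq_mul, mul_one]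
        push_cast
        have := Nat.floor_le (Real.exp_pos u).le
        have : 1 ≤ Real.exp u := Real.one_le_exp hu
        linarith
      calc _ ≤ 2 * Real.exp u * Real.exp (w * (-u)) := by gcongr
        _ = _ := by rw [mul_assoc, ← Real.exp_add]; congr 2; ring
  have hfun : (fun u => stepF a K u * Real.exp (w * (-u))) = fun u => K * Real.exp (w * (-u)) - ∑' n, F n u := by
    ext u; rw [hpt, stepF]; ring
  have hK : IntegrableOn (fun u => K * Real.exp (w * (-u))) (Set.Ici 0) := (expInt hw0 0).1.const_mul K
  rw [hfun]
  refine ⟨hK.sub hI2, ?_⟩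
  rw [integral_sub hK hI2, integral_const_mul, (expInt hw0 0).2, ← hkey.tsum_eq]
  simp_rw [hFv]
  rw [tsum_div_const]; simp; ring

/-- the analytic correction term -/
noncomputable def Hc (f : ℕ → ℤ) (s : ℂ) : ℂ :=
  ∑' p : Nat.Primes, (Complex.log (1 + -((f p : ℂ) * (p : ℂ) ^ (-s))) - -((f p : ℂ) * (p : ℂ) ^ (-s)))

lemma fp_abs (f : ℕ → ℤ) (hfpm : ∀ n : ℕ, 1 ≤ n → f n = 1 ∨ f n = -1) (n : ℕ) (hn : 1 ≤ n) :
    |(f n : ℝ)| = 1 := by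
  rcases hfpm n hn with h | h <;> simp [h]

lemma z_norm (f : ℕ → ℤ) (hfpm : ∀ n : ℕ, 1 ≤ n → f n = 1 ∨ f n = -1) (p : Nat.Primes) (s : ℂ) :
    ‖-((f p : ℂ) * (p : ℂ) ^ (-s))‖ = (p : ℝ) ^ (-s.re) := by
  rw [norm_neg, norm_mul, Complex.norm_intCast, fp_abs f hfpm p p.2.one_le, one_mul,
    Complex.norm_natCast_cpow_of_pos p.2.pos, Complex.neg_re]

lemma z_lt (p : Nat.Primes) {x : ℝ} (hx : 1 / 2 < x) :
    (p : ℝ) ^ (-x) ≤ 3 / 4 := by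
  have hp : (2:ℝ) ≤ p := by exact_mod_cast p.2.two_le
  calc (p : ℝ) ^ (-x) ≤ (2:ℝ) ^ (-x) := Real.rpow_le_rpow_of_nonpos (by norm_num) hp (by linarith)
    _ ≤ (2:ℝ) ^ (-(1/2) : ℝ) := Real.rpow_le_rpow_of_exponent_le (by norm_num) (by linarith)
    _ = (√2)⁻¹ := by rw [Real.rpow_neg (by norm_num), Real.sqrt_eq_rpow]
    _ ≤ 3 / 4 := by
      rw [inv_le_comm₀ (by positivity) (by norm_num)]
      apply Real.le_sqrt_of_sq_le; norm_num

lemma Hc_analytic (f : ℕ → ℤ) (hfpm : ∀ n : ℕ, 1 ≤ n → f n = 1 ∨ f n = -1) (s : ℂ) (hs : 1 / 2 < s.re) :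
    AnalyticAt ℂ (Hc f) s := by
  obtain ⟨δ, hδ1, hδ2⟩ := exists_between hs
  let U : Set ℂ := {z | δ < z.re}
  have hU : IsOpen U := isOpen_lt continuous_const Complex.continuous_re
  have hsU : s ∈ U := hδ2
  have hu : Summable fun p : Nat.Primes => 2 * (p : ℝ) ^ (-(2 * δ)) :=
    (Nat.Primes.summable_rpow.2 (by linarith)).mul_left 2
  have hd : DifferentiableOn ℂ (Hc f) U := by
    refine Complex.differentiableOn_tsum_of_summable_norm hu ?_ hU ?_
    · intro p z hz
      have hp0 : (p : ℂ) ≠ 0 := by exact_mod_cast p.2.ne_zero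
      have hdz : DifferentiableAt ℂ (fun s : ℂ => -((f p : ℂ) * (p : ℂ) ^ (-s))) z :=
        ((differentiableAt_id.neg.const_cpow (Or.inl hp0)).const_mul _).neg
      have hslit : 1 + -((f p : ℂ) * (p : ℂ) ^ (-z)) ∈ Complex.slitPlane := by
        apply Complex.mem_slitPlane_of_norm_lt_one
        rw [z_norm f hfpm]
        have := z_lt p (show 1 / 2 < z.re from hδ1.trans hz)
        linarith
      exact (((differentiableAt_const _).add hdz).clog hslit |>.sub hdz).differentiableWithinAt
    · intro p z hz
      have h3 := z_lt p (show 1 / 2 < z.re from hδ1.trans hz)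
      rw [← z_norm f hfpm p z] at h3
      refine (Complex.norm_log_one_add_sub_self_le (by linarith)).trans ?_
      have h4 : (1 - ‖-((f p : ℂ) * (p : ℂ) ^ (-z))‖)⁻¹ ≤ 4 := by
        rw [inv_le_comm₀ (by linarith) (by norm_num)]; linarith
      have h5 : ‖-((f p : ℂ) * (p : ℂ) ^ (-z))‖ ^ 2 ≤ (p : ℝ) ^ (-(2 * δ)) := by
        rw [z_norm f hfpm, ← Real.rpow_natCast, ← Real.rpow_mul (by positivity)]
        apply Real.rpow_le_rpow_of_exponent_le
        · exact_mod_cast p.2.one_le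
        · have : δ < z.re := hz
          push_cast; linarith
      calc _ ≤ (p : ℝ) ^ (-(2 * δ)) * 4 / 2 := by
            have : 0 ≤ (1 - ‖-((f p : ℂ) * (p : ℂ) ^ (-z))‖)⁻¹ := inv_nonneg.2 (by linarith)
            gcongr
        _ = _ := by ring
  exact hd.analyticAt (hU.mem_nhds hsU)

lemma euler_aux (f : ℕ → ℤ)
    (hf1 : f 1 = 1)
    (hfmul : ∀ a b : ℕ, f (a * b) = f a * f b)
    (hfpm : ∀ n : ℕ, 1 ≤ n → f n = 1 ∨ f n = -1) {s : ℝ} (hs : 1 < s) :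
    ∑' n : ℕ, ((ArithmeticFunction.moebius n * f n : ℤ) : ℝ) * (n : ℝ) ^ (-s) =
      Real.exp ((Hc f s).re - ∑' p : Nat.Primes, (f p : ℝ) * (p : ℝ) ^ (-s)) := by
  set g : ℕ → ℝ := fun n => ((ArithmeticFunction.moebius n * f n : ℤ) : ℝ) * (n : ℝ) ^ (-s) with hg
  have hgs : Summable (fun n => ‖g n‖) := by
    refine Summable.of_nonneg_of_le (fun n => norm_nonneg _) (fun n => ?_) (Real.summable_nat_rpow.2 (show -s < -1 by linarith))
    simp only [hg]
    rw [norm_mul, Real.norm_of_nonneg (show 0 ≤ (n : ℝ) ^ (-s) by positivity)]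
    refine mul_le_of_le_one_left (by positivity) ?_
    rcases Nat.eq_zero_or_pos n with rfl | hn
    · simp
    · push_cast
      rw [norm_mul, Real.norm_eq_abs, Real.norm_eq_abs, fp_abs f hfpm n hn, mul_one]
      exact_mod_cast ArithmeticFunction.abs_moebius_le_one
  have hmul : ∀ {m n : ℕ}, Nat.Coprime m n → g (m * n) = g m * g n := by
    intro m n h
    simp only [hg]
    rw [ArithmeticFunction.isMultiplicative_moebius.map_mul_of_coprime h, hfmul]
    push_cast
    rw [Real.mul_rpow (by positivity) (by positivity)]; ring
  have hprod := EulerProduct.eulerProduct_hasProd (f := g) (by simp [hg, hf1]) hmul hgs (by simp [hg])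
  have hloc : ∀ p : Nat.Primes, ∑' e, g (p ^ e) = 1 + -((f p : ℝ) * (p : ℝ) ^ (-s)) := by
    intro p
    rw [tsum_eq_sum (s := Finset.range 2)]
    · simp [Finset.sum_range_succ, hg, hf1, ArithmeticFunction.moebius_apply_prime p.2]
    · intro e he
      have he' : 1 < e := by simpa using he
      simp only [hg]
      rw [ArithmeticFunction.moebius_apply_prime_pow p.2 (by omega), if_neg (by omega)]
      simp
  simp_rw [hloc] at hprod
  have hzr : ∀ p : Nat.Primes, |(f p : ℝ) * (p : ℝ) ^ (-s)| ≤ 3 / 4 := by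
    intro p
    rw [abs_mul, fp_abs f hfpm p p.2.one_le, one_mul, abs_of_nonneg (by positivity)]
    exact z_lt p (by linarith)
  have hzs : Summable fun p : Nat.Primes => (f p : ℝ) * (p : ℝ) ^ (-s) := by
    refine Summable.of_norm_bounded (Nat.Primes.summable_rpow.2 (show -s < -1 by linarith)) fun p => ?_
    rw [norm_mul, Real.norm_eq_abs, fp_abs f hfpm p p.2.one_le, one_mul, Real.norm_of_nonneg (by positivity)]
  have hls := Real.summable_log_one_add_of_summable hzs.neg
  have hpos : ∀ p : Nat.Primes, 0 < 1 + -((f p : ℝ) * (p : ℝ) ^ (-s)) := by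
    intro p
    have := (abs_le.1 (hzr p)).2
    linarith
  rw [← hprod.tprod_eq, ← Real.rexp_tsum_eq_tprod hpos hls]
  congr 1
  have hH : Hc f s = ((∑' p : Nat.Primes, (Real.log (1 + -((f p : ℝ) * (p : ℝ) ^ (-s))) - -((f p : ℝ) * (p : ℝ) ^ (-s))) : ℝ) : ℂ) := by
    rw [Hc, Complex.ofReal_tsum]
    refine tsum_congr fun p => ?_
    rw [Complex.ofReal_sub, Complex.ofReal_log (hpos p).le]
    push_cast
    rw [Complex.ofReal_cpow (by positivity)]
    push_cast
    rfl
  rw [hH, Complex.ofReal_re, hls.tsum_sub hzs.neg, tsum_neg]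
  ring

open MeasureTheory ProbabilityTheory Filter Topology Set in
theorem stmt_18_aux (f : ℕ → ℤ)
    (hf1 : f 1 = 1)
    (hfmul : ∀ a b : ℕ, f (a * b) = f a * f b)
    (hfpm : ∀ n : ℕ, 1 ≤ n → f n = 1 ∨ f n = -1)
    (σ : ℝ) (hσ : σ ∈ Set.Ioc (1 / 2 : ℝ) 1)
    (hdiv : Filter.Tendsto (fun N : ℕ => ∑ p ∈ N.primesBelow, (f p : ℝ) / (p : ℝ) ^ σ)
      Filter.atTop Filter.atBot) (C : ℝ)
    (hC : ∀ N : ℕ, |((∑ n ∈ Finset.Icc 1 N, ArithmeticFunction.moebius n * f n : ℤ) : ℝ)| ≤ C) : False := by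
  obtain ⟨hσ1, hσ2⟩ := hσ
  -- the Moebius side
  set a1 : ℕ → ℝ := fun n => -((ArithmeticFunction.moebius n * f n : ℤ) : ℝ) with ha1
  have hst1 : ∀ u, stepF a1 C u = C +
      ((∑ n ∈ Finset.Icc 1 ⌊Real.exp u⌋₊, ArithmeticFunction.moebius n * f n : ℤ) : ℝ) := by
    intro u
    have h1 : Finset.Icc 1 ⌊Real.exp u⌋₊ = Finset.Ico 1 (⌊Real.exp u⌋₊ + 1) := by
      ext; simp
    rw [stepF, Finset.range_eq_Ico, Finset.sum_eq_sum_Ico_succ_bot (by omega), h1]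
    simp [ha1]
  have hpos1 : ∀ u, 0 ≤ stepF a1 C u := by
    intro u; rw [hst1]; have := (abs_le.1 (hC ⌊Real.exp u⌋₊)).1; linarith
  have hle1 : ∀ u, stepF a1 C u ≤ 2 * C := by
    intro u; rw [hst1]; have := (abs_le.1 (hC ⌊Real.exp u⌋₊)).2; linarith
  have ha1b : ∀ n, |a1 n| ≤ 1 := by
    intro n
    simp only [ha1]
    rcases Nat.eq_zero_or_pos n with rfl | hn
    · simp
    · push_cast
      rw [abs_neg, abs_mul, fp_abs f hfpm n hn, mul_one]
      exact_mod_cast ArithmeticFunction.abs_moebius_le_one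
  set E : ℝ → ℝ := mgf (fun u : ℝ => -u) (stepM a1 C) with hE
  have hS1 : Ioi 0 ⊆ integrableExpSet (fun u : ℝ => -u) (stepM a1 C) := by
    intro w hw
    rw [stepM_int a1 C hpos1]
    refine Integrable.mono' ((expInt hw 0).1.const_mul (2 * C)) ?_ ?_
    · exact ((stepF_meas a1 C).mul (by fun_prop)).aestronglyMeasurable
    · refine ae_of_all _ fun u => ?_
      rw [norm_mul, Real.norm_of_nonneg (hpos1 u), Real.norm_of_nonneg (Real.exp_pos _).le]
      exact mul_le_mul_of_nonneg_right (hle1 u) (Real.exp_pos _).le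
  set Fn : ℝ → ℝ := fun w => (σ + w) * E (σ + w) - C with hFn
  have hFnA : ∀ w, 0 ≤ w → AnalyticAt ℝ Fn w := by
    intro w hw
    have h1 : AnalyticAt ℝ (fun w : ℝ => σ + w) w := analyticAt_const.add analyticAt_id
    have h2 : AnalyticAt ℝ E (σ + w) :=
      analyticAt_mgf (interior_maximal hS1 isOpen_Ioi (show (0:ℝ) < σ + w by linarith))
    exact (h1.mul (h2.comp_of_eq h1 rfl)).sub analyticAt_const
  have hFnv : ∀ w, 1 < w → Fn w = ∑' n : ℕ, ((ArithmeticFunction.moebius n * f n : ℤ) : ℝ) * (n : ℝ) ^ (-(σ + w)) := by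
    intro w hw
    simp only [hFn, hE]
    rw [stepM_mgf a1 C hpos1, (abel_aux a1 C (by simp [ha1]) ha1b (show 1 < σ + w by linarith)).2]
    simp only [ha1, neg_mul]
    rw [tsum_neg]
    have : σ + w ≠ 0 := by linarith
    field_simp
    ring
  -- the correction
  set H : ℝ → ℝ := fun w => (Hc f ((σ + w : ℝ) : ℂ)).re with hH
  have hHA : ∀ w, 0 ≤ w → AnalyticAt ℝ H w := by
    intro w hw
    have h1 : AnalyticAt ℝ (fun w : ℝ => σ + w) w := analyticAt_const.add analyticAt_id
    have h2 : AnalyticAt ℝ (fun x : ℝ => (Hc f (x : ℂ)).re) (σ + w) :=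
      (Hc_analytic f hfpm ((σ + w : ℝ) : ℂ) (by rw [Complex.ofReal_re]; linarith)).re_ofReal
    exact h2.comp_of_eq h1 rfl
  -- the prime side
  set a2 : ℕ → ℝ := fun n => if n.Prime then (f n : ℝ) / (n : ℝ) ^ σ else 0 with ha2
  have hA2 : ∀ n, ∑ k ∈ Finset.range n, a2 k = ∑ p ∈ n.primesBelow, (f p : ℝ) / (p : ℝ) ^ σ := by
    intro n
    rw [Nat.primesBelow, Finset.sum_filter]
  have ha2b : ∀ n, |a2 n| ≤ 1 := by
    intro n
    simp only [ha2]
    split_ifs with hn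
    · rw [abs_div, fp_abs f hfpm n hn.one_le, abs_of_nonneg (by positivity)]
      refine div_le_one_of_le₀ ?_ (by positivity)
      exact Real.one_le_rpow (by exact_mod_cast hn.one_le) (by linarith)
    · simp
  obtain ⟨K, hK⟩ : ∃ K, ∀ n, ∑ k ∈ Finset.range n, a2 k ≤ K := by
    obtain ⟨N0, hN0⟩ := eventually_atTop.1 (hdiv.eventually_le_atBot 0)
    refine ⟨∑ m ∈ Finset.range N0, |∑ k ∈ Finset.range m, a2 k|, fun n => ?_⟩
    rcases le_or_gt N0 n with h | h
    · rw [hA2]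
      exact (hN0 n h).trans (Finset.sum_nonneg fun _ _ => abs_nonneg _)
    · exact (le_abs_self _).trans (Finset.single_le_sum (f := fun m => |∑ k ∈ Finset.range m, a2 k|)
        (fun _ _ => abs_nonneg _) (Finset.mem_range.2 h))
  have hpos2 : ∀ u, 0 ≤ stepF a2 K u := fun u => sub_nonneg.2 (hK _)
  have hlarge : ∀ L : ℝ, ∃ U : ℝ, 0 ≤ U ∧ ∀ u, U ≤ u → L ≤ stepF a2 K u := by
    intro L
    obtain ⟨N0, hN0⟩ := eventually_atTop.1 (hdiv.eventually_le_atBot (K - L))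
    refine ⟨Real.log N0, Real.log_natCast_nonneg _, fun u hu => ?_⟩
    have h1 : N0 ≤ ⌊Real.exp u⌋₊ + 1 := by
      rcases Nat.eq_zero_or_pos N0 with rfl | h
      · simp
      · refine le_trans ?_ (Nat.le_succ _)
        rw [Nat.le_floor_iff (Real.exp_pos _).le]
        exact (Real.log_le_iff_le_exp (by positivity)).1 hu
    have h2 := hN0 _ h1
    rw [← hA2] at h2
    rw [stepF]; linarith
  set D : ℝ → ℝ := mgf (fun u : ℝ => -u) (stepM a2 K) with hD
  have hD0 : ∀ w, 0 ≤ D w := fun w => mgf_nonneg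
  set S := integrableExpSet (fun u : ℝ => -u) (stepM a2 K) with hS
  have h1S : Ioi 1 ⊆ S := by
    intro w hw
    rw [hS, stepM_int a2 K hpos2]
    exact (abel_aux a2 K (by simp [ha2, Nat.not_prime_zero]) ha2b hw).1
  have hid1 : ∀ w, 1 < w → Fn w = Real.exp (H w - K + w * D w) := by
    intro w hw
    rw [hFnv w hw, euler_aux f hf1 hfmul hfpm (show 1 < σ + w by linarith)]
    congr 1
    have h2 : D w = (K - ∑' n, a2 n * (n:ℝ) ^ (-w)) / w := by
      rw [hD, stepM_mgf a2 K hpos2, (abel_aux a2 K (by simp [ha2, Nat.not_prime_zero]) ha2b hw).2]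
    have h3 : ∑' p : Nat.Primes, (f p : ℝ) * (p : ℝ) ^ (-(σ + w)) = ∑' n, a2 n * (n:ℝ) ^ (-w) := by
      refine (tsum_subtype {p : ℕ | p.Prime} (fun n : ℕ => (f n : ℝ) * (n : ℝ) ^ (-(σ + w)))).trans ?_
      refine tsum_congr fun n => ?_
      by_cases hn : n.Prime
      · rw [indicator_of_mem (by exact hn)]
        simp only [ha2, if_pos hn]
        have : (0:ℝ) < n := by exact_mod_cast hn.pos
        rw [neg_add, Real.rpow_add this, Real.rpow_neg this.le σ]
        field_simp
      · rw [indicator_of_notMem (by exact hn)]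
        simp [ha2, hn]
    rw [h2, h3, mul_div_cancel₀ _ (by linarith)]
    ring
  have hid : ∀ t, 0 ≤ t → Ioi t ⊆ S → ∀ w, t < w → Fn w = Real.exp (H w - K + w * D w) := by
    intro t ht htS w hw
    have hDA : AnalyticOnNhd ℝ D (Ioi t) := fun x hx =>
      analyticAt_mgf (interior_maximal htS isOpen_Ioi hx)
    have hR : AnalyticOnNhd ℝ (fun w => Real.exp (H w - K + w * D w)) (Ioi t) := fun x hx =>
      (((hHA x (ht.trans (le_of_lt hx))).sub analyticAt_const).add (analyticAt_id.mul (hDA x hx))).rexp'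
    have hL : AnalyticOnNhd ℝ Fn (Ioi t) := fun x hx => hFnA x (ht.trans (le_of_lt hx))
    refine hL.eqOn_of_preconnected_of_eventuallyEq hR isPreconnected_Ioi
      (z₀ := max t 1 + 1) ?_ ?_ hw
    · have := le_max_left t 1
      rw [mem_Ioi]; linarith
    · filter_upwards [Ioi_mem_nhds (show 1 < max t 1 + 1 by have := le_max_right t 1; linarith)] with x hx
      exact hid1 x hx
  -- abscissa
  have h0S : Ioi 0 ⊆ S := by
    set Q : Set ℝ := {t | 0 ≤ t ∧ Ioi t ⊆ S} with hQ
    have hQb : BddBelow Q := ⟨0, fun t ht => ht.1⟩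
    have hQ1 : (1:ℝ) ∈ Q := ⟨zero_le_one, h1S⟩
    set T := sInf Q with hT
    have hT0 : 0 ≤ T := le_csInf ⟨1, hQ1⟩ fun t ht => ht.1
    have hTS : Ioi T ⊆ S := by
      intro w hw
      obtain ⟨t, ht, htw⟩ := exists_lt_of_csInf_lt ⟨1, hQ1⟩ hw
      exact ht.2 htw
    rcases hT0.eq_or_lt with h | hTpos
    · rwa [h]
    exfalso
    have hcF : Tendsto Fn (𝓝[>] T) (𝓝 (Fn T)) := (hFnA T hT0).continuousAt.tendsto.mono_left nhdsWithin_le_nhds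
    have hcH : Tendsto H (𝓝[>] T) (𝓝 (H T)) := (hHA T hT0).continuousAt.tendsto.mono_left nhdsWithin_le_nhds
    have hFT : Real.exp (H T - K) ≤ Fn T := by
      refine le_of_tendsto_of_tendsto ((hcH.sub_const K).rexp) hcF ?_
      filter_upwards [self_mem_nhdsWithin] with w hw
      rw [hid T hT0 hTS w hw]
      apply Real.exp_le_exp.2
      have := mul_nonneg (hT0.trans (le_of_lt hw)) (hD0 w)
      linarith
    have hFTpos : 0 < Fn T := (Real.exp_pos _).trans_le hFT
    have hGA : AnalyticAt ℝ (fun w => (Real.log (Fn w) - H w + K) / w) T :=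
      (((hFnA T hT0).log hFTpos).sub (hHA T hT0)).add analyticAt_const |>.div analyticAt_id hTpos.ne'
    obtain ⟨w0, hw0, hw0S⟩ := landau_aux (stepM a2 K) (stepM_pos a2 K) T hTS _ hGA (by
      intro w hw
      have : w ≠ 0 := by linarith
      rw [hid T hT0 hTS w hw, Real.log_exp, div_eq_iff this]
      ring)
    have hmem : max w0 0 ∈ Q := by
      refine ⟨le_max_right _ _, fun w hw => ?_⟩
      have hw' : w0 < w := (le_max_left _ _).trans_lt hw
      rcases lt_or_ge T w with h | h
      · exact hTS h
      · exact (convex_integrableExpSet.ordConnected).out hw0S (hTS (show T < T + 1 by linarith))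
          ⟨hw'.le, by linarith⟩
    have := csInf_le hQb hmem
    rw [← hT] at this
    exact absurd (max_lt hw0 hTpos) (not_lt.2 this)
  have hid0 := hid 0 le_rfl h0S
  have hcF : Tendsto Fn (𝓝[>] 0) (𝓝 (Fn 0)) := (hFnA 0 le_rfl).continuousAt.tendsto.mono_left nhdsWithin_le_nhds
  have hcH : Tendsto H (𝓝[>] 0) (𝓝 (H 0)) := (hHA 0 le_rfl).continuousAt.tendsto.mono_left nhdsWithin_le_nhds
  have hfin : ∀ L : ℝ, Real.exp (H 0 - K + L) ≤ Fn 0 := by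
    intro L
    obtain ⟨U, hU0, hU⟩ := hlarge L
    have hlow : ∀ w, 0 < w → L * Real.exp (-w * U) ≤ w * D w := by
      intro w hw
      have hIntD := (stepM_int a2 K hpos2 w).1 (h0S hw)
      have h1 : ∫ u in Ici U, L * Real.exp (w * (-u)) ≤ D w := by
        rw [hD, stepM_mgf a2 K hpos2]
        calc _ ≤ ∫ u in Ici U, stepF a2 K u * Real.exp (w * (-u)) := by
              refine setIntegral_mono_on ((expInt hw U).1.const_mul L) (hIntD.mono_set (Ici_subset_Ici.2 hU0))
                measurableSet_Ici fun u hu => ?_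
              exact mul_le_mul_of_nonneg_right (hU u hu) (Real.exp_pos _).le
          _ ≤ _ := setIntegral_mono_set hIntD
              (ae_of_all _ fun u => mul_nonneg (hpos2 u) (Real.exp_pos _).le)
              (Ici_subset_Ici.2 hU0).eventuallyLE
      rw [integral_const_mul, (expInt hw U).2] at h1
      calc _ = w * (L * (Real.exp (-w * U) / w)) := by field_simp
        _ ≤ _ := mul_le_mul_of_nonneg_left h1 hw.le
    have hcE : Tendsto (fun w : ℝ => L * Real.exp (-w * U)) (𝓝[>] 0) (𝓝 L) := by
      have : Continuous fun w : ℝ => L * Real.exp (-w * U) := by fun_prop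
      have h := this.tendsto 0
      simp only [neg_zero, zero_mul, Real.exp_zero, mul_one] at h
      exact h.mono_left nhdsWithin_le_nhds
    refine le_of_tendsto_of_tendsto (((hcH.sub_const K).add hcE).rexp) hcF ?_
    filter_upwards [self_mem_nhdsWithin] with w hw
    rw [hid0 w hw]
    apply Real.exp_le_exp.2
    have := hlow w hw
    linarith
  have h1 := hfin (Fn 0 + K - H 0)
  rw [show H 0 - K + (Fn 0 + K - H 0) = Fn 0 by ring] at h1
  have := Real.add_one_le_exp (Fn 0)
  linarith

/-- If `f` is completely multiplicative with values in `{-1, 1}`, `1/2 < σ ≤ 1`, and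
`∑_{p ≤ x} f p / p^σ → -∞`, then the partial sums of `μ·f` are unbounded. -/
theorem stmt_18 (f : ℕ → ℤ)
    (hf1 : f 1 = 1)
    (hfmul : ∀ a b : ℕ, f (a * b) = f a * f b)
    (hfpm : ∀ n : ℕ, 1 ≤ n → f n = 1 ∨ f n = -1)
    (σ : ℝ) (hσ : σ ∈ Set.Ioc (1 / 2 : ℝ) 1)
    (hdiv : Filter.Tendsto (fun N : ℕ => ∑ p ∈ N.primesBelow, (f p : ℝ) / (p : ℝ) ^ σ)
      Filter.atTop Filter.atBot) :
    ∀ C : ℝ, ∃ N : ℕ,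
      C < |((∑ n ∈ Finset.Icc 1 N, ArithmeticFunction.moebius n * f n : ℤ) : ℝ)| := by
  intro C
  by_contra hcon
  refine stmt_18_aux f hf1 hfmul hfpm σ hσ hdiv C fun N => ?_
  by_contra h
  exact hcon ⟨N, not_le.1 h⟩
end

section
/- Let f : ℕ → ℤ be a completely multiplicative function taking values in {-1, 1}, let σ be a real number with 1/2 < σ ≤ 1, let k ≥ 1 be an integer, and let c ∈ [-1, 1] be nonzero. Suppose that ∑_{p ≤ x} f(p) = c · x^σ / (log x · log₂ x ··· log_k x) · (1 + o(1)) as x → ∞, where log_j x denotes the j-fold iterated logarithm (log_1 x = log x) and the sum runs over primes p. If c > 0 then the partial sums of f are unbounded, lim sup_{N→∞} |∑_{n=1}^{N} f(n)| = ∞; and if c < 0 then the partial sums of μ·f are unbounded, lim sup_{N→∞} |∑_{n=1}^{N} μ(n) f(n)| = ∞, where μ is the Möbius function. -/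
open Filter Asymptotics

noncomputable def psum19 (a : ℕ → ℂ) (t : ℝ) : ℂ := ∑ k ∈ Finset.Icc 1 ⌊t⌋₊, a k

noncomputable def dser19 (a : ℕ → ℂ) (s : ℂ) : ℂ := s * mellin (psum19 a) (-s)

lemma psum19_zero (a : ℕ → ℂ) {t : ℝ} (ht : t < 1) : psum19 a t = 0 := by
  have : ⌊t⌋₊ = 0 := Nat.floor_eq_zero.mpr ht
  simp [psum19, this]

lemma psum19_loc (a : ℕ → ℂ) : MeasureTheory.LocallyIntegrableOn (psum19 a) (Set.Ioi 0) := by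
  have h := locallyIntegrableOn_mul_sum_Icc (m := 1) a (le_refl (0:ℝ)) (g := fun _ => (1:ℂ))
    ((MeasureTheory.locallyIntegrable_const (1:ℂ)).locallyIntegrableOn _)
  simp only [one_mul] at h
  exact h.mono_set Set.Ioi_subset_Ici_self

lemma psum19_bot (a : ℕ → ℂ) (b : ℝ) :
    psum19 a =O[nhdsWithin 0 (Set.Ioi 0)] (fun t : ℝ => t ^ (-b)) := by
  refine (isBigO_zero _ _).congr' ?_ EventuallyEq.rfl
  have : ∀ᶠ t : ℝ in nhdsWithin 0 (Set.Ioi 0), t < 1 :=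
    nhdsWithin_le_nhds (eventually_lt_nhds zero_lt_one)
  filter_upwards [this] with t ht
  rw [psum19_zero a ht]

lemma dser19_conv (a : ℕ → ℂ) {r : ℝ} (hO : psum19 a =O[atTop] (fun t : ℝ => t ^ r))
    {s : ℂ} (hs : r < s.re) : MellinConvergent (psum19 a) (-s) := by
  refine mellinConvergent_of_isBigO_rpow (a := -r) (b := -s.re - 1) (psum19_loc a) (by simpa using hO)
    (by simpa using hs) (psum19_bot a _) (by simp)

lemma dser19_diff (a : ℕ → ℂ) {r : ℝ} (hO : psum19 a =O[atTop] (fun t : ℝ => t ^ r))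
    {s : ℂ} (hs : r < s.re) : DifferentiableAt ℂ (dser19 a) s := by
  have h : DifferentiableAt ℂ (mellin (psum19 a)) (-s) :=
    mellin_differentiableAt_of_isBigO_rpow (a := -r) (b := -s.re - 1) (psum19_loc a)
      (by simpa using hO) (by simpa using hs) (psum19_bot a _) (by simp)
  unfold dser19
  exact differentiableAt_id.mul (h.comp s differentiableAt_id.neg)

lemma dser19_eq (a : ℕ → ℂ) {r : ℝ} (hr : 0 ≤ r) (hO : psum19 a =O[atTop] (fun t : ℝ => t ^ r))
    {s : ℂ} (hs : r < s.re) (hS : LSeriesSummable a s) : LSeries a s = dser19 a s := by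
  rw [LSeries_eq_mul_integral a hr hs hS, dser19]
  · congr 1
    unfold mellin
    rw [← MeasureTheory.integral_indicator measurableSet_Ioi,
      ← MeasureTheory.integral_indicator measurableSet_Ioi]
    apply MeasureTheory.integral_congr_ae
    have : ∀ᵐ t : ℝ, t ≠ 1 := by simp [MeasureTheory.ae_iff]
    filter_upwards [this] with t ht
    rcases lt_or_gt_of_ne ht with h | h
    · rw [Set.indicator_of_notMem (by simpa using h.le)]
      by_cases h0 : t ∈ Set.Ioi (0:ℝ)
      · rw [Set.indicator_of_mem h0, psum19_zero a h]; simp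
      · rw [Set.indicator_of_notMem h0]
    · rw [Set.indicator_of_mem (by simpa using h),
        Set.indicator_of_mem (by simpa using zero_lt_one.trans h)]
      simp only [psum19, smul_eq_mul]
      rw [mul_comm]
      congr 2; ring
  · have := hO.comp_tendsto tendsto_natCast_atTop_atTop
    refine this.congr_left ?_
    intro n; simp [psum19]

lemma logit19_tendsto (n : ℕ) : Tendsto (Real.log^[n]) atTop atTop := by
  induction n with
  | zero => simpa using! tendsto_id
  | succ n ih => rw [Function.iterate_succ']; exact Real.tendsto_log_atTop.comp ih

lemma logit19_deriv (n : ℕ) (t : ℝ) (ht : 0 < t) (h : ∀ j ≤ n, 0 < Real.log^[j] t) :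
    HasDerivAt (Real.log^[n + 1]) (1 / (t * ∏ j ∈ Finset.Icc 1 n, Real.log^[j] t)) t := by
  induction n with
  | zero => simpa using Real.hasDerivAt_log ht.ne'
  | succ n ih =>
    have h1 := ih (fun j hj => h j (by omega))
    rw [Function.iterate_succ']
    have h2 := (Real.hasDerivAt_log (h (n+1) le_rfl).ne').comp t h1
    have h3 : (Real.log^[n + 1] t)⁻¹ * (1 / (t * ∏ j ∈ Finset.Icc 1 n, Real.log^[j] t))
        = 1 / (t * ∏ j ∈ Finset.Icc 1 (n + 1), Real.log^[j] t) := by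
      rw [Finset.prod_Icc_succ_top (by omega), ← one_div, div_mul_div_comm]; congr 1 <;> ring
    rw [← h3]
    exact h2

open MeasureTheory in
lemma lower19 (k : ℕ) (σ δ : ℝ) (hσ : 0 < σ) (hδ : 0 < δ) (Q : ℝ → ℝ)
    (hQ0 : ∀ t < 1, Q t = 0) (hQ1 : ∀ t, 0 ≤ t → |Q t| ≤ t)
    (hQ : ∀ᶠ t in atTop, δ * (t ^ σ / ∏ j ∈ Finset.Icc 1 k, Real.log^[j] t) ≤ Q t)
    (hint : ∀ s > σ, IntegrableOn (fun t => t ^ (-s - 1) * Q t) (Set.Ioi 0))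
    (M : ℝ) (hM : ∀ᶠ s in nhdsWithin σ (Set.Ioi σ), ∫ t in Set.Ioi (0:ℝ), t ^ (-s - 1) * Q t ≤ M) :
    False := by
  have hev : ∀ᶠ t in atTop, ∀ j ≤ k, 0 < Real.log^[j] t := by
    have : ∀ᶠ t in atTop, ∀ j ∈ Finset.range (k+1), 0 < Real.log^[j] t := by
      rw [Filter.eventually_all_finset]
      exact fun j _ => (logit19_tendsto j).eventually_gt_atTop 0
    filter_upwards [this] with t ht j hj using ht j (by simp; omega)
  obtain ⟨T, hT⟩ := eventually_atTop.mp (hQ.and (hev.and (eventually_ge_atTop 1)))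
  have hT1 : 1 ≤ T := (hT T le_rfl).2.2
  set W : ℝ → ℝ := fun t => 1 / (t * ∏ j ∈ Finset.Icc 1 k, Real.log^[j] t) with hW
  have hprod : ∀ t ≥ T, 0 < ∏ j ∈ Finset.Icc 1 k, Real.log^[j] t := fun t ht =>
    Finset.prod_pos fun j hj => (hT t ht).2.1 j (Finset.mem_Icc.mp hj).2
  have hder : ∀ t ≥ T, HasDerivAt (Real.log^[k+1]) (W t) t := fun t ht =>
    logit19_deriv k t (by linarith) (hT t ht).2.1
  have hcont : ContinuousOn W (Set.Ici T) := by
    intro t ht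
    have ht' : T ≤ t := ht
    apply ContinuousAt.continuousWithinAt
    apply ContinuousAt.div continuousAt_const
    · apply continuousAt_id.mul
      refine tendsto_finsetProd _ fun j hj => ?_
      obtain ⟨i, rfl⟩ : ∃ i, j = i + 1 := ⟨j - 1, by have := (Finset.mem_Icc.mp hj).1; omega⟩
      exact (logit19_deriv i t (by linarith) (fun l hl => (hT t ht').2.1 l
        (by have := (Finset.mem_Icc.mp hj).2; omega))).continuousAt
    · exact (mul_pos (by linarith) (hprod t ht')).ne'
  obtain ⟨R, hR, hRT⟩ := (((logit19_tendsto (k+1)).eventually_gt_atTop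
    (Real.log^[k+1] T + 2 / δ * (M + T * T))).and (eventually_ge_atTop T)).exists
  have hR0 : 0 < R := by linarith
  have hev2 : ∀ᶠ s in nhdsWithin σ (Set.Ioi σ), 1/2 < R ^ (σ - s) := by
    apply nhdsWithin_le_nhds
    have : ContinuousAt (fun s => R ^ (σ - s)) σ :=
      ContinuousAt.rpow continuousAt_const (by fun_prop) (Or.inl hR0.ne')
    apply this.eventually_const_lt
    norm_num
  obtain ⟨s, ⟨hs1, hs2⟩, hs3⟩ := ((hM.and hev2).and self_mem_nhdsWithin).exists
  have hs : σ < s := hs3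
  have hi := hint s hs
  have e1 : ∫ t in Set.Ioi (0:ℝ), t ^ (-s - 1) * Q t =
      (∫ t in Set.Ioc 0 T, t ^ (-s - 1) * Q t) + ((∫ t in Set.Ioc T R, t ^ (-s - 1) * Q t)
        + ∫ t in Set.Ioi R, t ^ (-s - 1) * Q t) := by
    rw [← setIntegral_union (Set.Ioc_disjoint_Ioi le_rfl) measurableSet_Ioi
        (hi.mono_set fun x hx => by have := hx.1; simp; linarith)
        (hi.mono_set fun x hx => by have := Set.mem_Ioi.mp hx; simp; linarith),
      Set.Ioc_union_Ioi_eq_Ioi hRT,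
      ← setIntegral_union (Set.Ioc_disjoint_Ioi le_rfl) measurableSet_Ioi
        (hi.mono_set fun x hx => by have := hx.1; simp; linarith)
        (hi.mono_set fun x hx => by have := Set.mem_Ioi.mp hx; simp; linarith),
      Set.Ioc_union_Ioi_eq_Ioi (by linarith)]
  have hQpos : ∀ t ≥ T, 0 ≤ Q t := fun t ht =>
    le_trans (mul_nonneg hδ.le (div_nonneg (Real.rpow_nonneg (by linarith) _) (hprod t ht).le)) (hT t ht).1
  have b1 : -(T * T) ≤ ∫ t in Set.Ioc 0 T, t ^ (-s - 1) * Q t := by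
    have := norm_setIntegral_le_of_norm_le_const (μ := volume) (s := Set.Ioc 0 T)
      (f := fun t => t ^ (-s - 1) * Q t) (C := T) (by simp) (by
        intro t ht
        rcases lt_or_ge t 1 with h | h
        · simp [hQ0 t h]; linarith
        · rw [norm_mul, Real.norm_eq_abs, Real.norm_eq_abs, abs_of_nonneg (Real.rpow_nonneg ht.1.le _)]
          have h1 : t ^ (-s - 1) ≤ 1 := Real.rpow_le_one_of_one_le_of_nonpos h (by linarith)
          have h2 := hQ1 t ht.1.le
          have h3 := ht.2
          nlinarith [abs_nonneg (Q t)])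
    have h4 : volume.real (Set.Ioc 0 T) = T := by
      rw [Real.volume_real_Ioc_of_le (by linarith)]; ring
    rw [h4] at this
    exact (abs_le.mp this).1
  have b3 : 0 ≤ ∫ t in Set.Ioi R, t ^ (-s - 1) * Q t := by
    apply setIntegral_nonneg measurableSet_Ioi
    intro t ht
    have ht : R < t := ht
    exact mul_nonneg (Real.rpow_nonneg (by linarith) _) (hQpos t (by linarith))
  have hWi : IntervalIntegrable W volume T R :=
    (hcont.mono (by rw [Set.uIcc_of_le hRT]; exact Set.Icc_subset_Ici_self)).intervalIntegrable
  have ftc : ∫ t in T..R, W t = Real.log^[k+1] R - Real.log^[k+1] T :=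
    intervalIntegral.integral_eq_sub_of_hasDerivAt (fun t ht => hder t (by
      rw [Set.uIcc_of_le hRT] at ht; exact ht.1)) hWi
  rw [intervalIntegral.integral_of_le hRT] at ftc
  have b2 : ∫ t in Set.Ioc T R, (δ / 2) * W t ≤ ∫ t in Set.Ioc T R, t ^ (-s - 1) * Q t := by
    apply setIntegral_mono_on
    · exact (((intervalIntegrable_iff_integrableOn_Ioc_of_le hRT).mp hWi).const_mul _)
    · exact (hi.mono_set fun x hx => by have := hx.1; simp; linarith)
    · exact measurableSet_Ioc
    · intro t ht
      have ht0 : 0 < t := by linarith [ht.1]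
      have hp := hprod t ht.1.le
      have h1 := (hT t ht.1.le).1
      have h2 : R ^ (σ - s) ≤ t ^ (σ - s) :=
        Real.rpow_le_rpow_of_nonpos ht0 ht.2 (by linarith)
      have h3 : t ^ (-s - 1) * t ^ σ = t ^ (σ - s) * t⁻¹ := by
        rw [← Real.rpow_add ht0, ← Real.rpow_neg_one t, ← Real.rpow_add ht0]; congr 1; ring
      calc δ / 2 * W t ≤ δ * t ^ (σ - s) * W t := by
            apply mul_le_mul_of_nonneg_right
            · nlinarith
            · exact (one_div_pos.mpr (mul_pos ht0 hp)).le
        _ = t ^ (-s - 1) * (δ * (t ^ σ / ∏ j ∈ Finset.Icc 1 k, Real.log^[j] t)) := by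
            rw [show t ^ (-s - 1) * (δ * (t ^ σ / ∏ j ∈ Finset.Icc 1 k, Real.log^[j] t))
              = δ * (t ^ (-s - 1) * t ^ σ) / ∏ j ∈ Finset.Icc 1 k, Real.log^[j] t by ring, h3, hW]
            field_simp
        _ ≤ _ := mul_le_mul_of_nonneg_left h1 (Real.rpow_nonneg ht0.le _)
  rw [integral_const_mul, ftc] at b2
  have : δ / 2 * (2 / δ * (M + T * T)) = M + T * T := by field_simp
  have h5 : δ / 2 * (2 / δ * (M + T * T)) < δ / 2 * (Real.log^[k+1] R - Real.log^[k+1] T) :=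
    mul_lt_mul_of_pos_left (by linarith) (by positivity)
  linarith

noncomputable def hterm19 (g : ℕ → ℂ) (p : Nat.Primes) (s : ℂ) : ℂ :=
  -Complex.log (1 - g p * (p : ℂ) ^ (-s)) - g p * (p : ℂ) ^ (-s)

noncomputable def hser19 (g : ℕ → ℂ) (s : ℂ) : ℂ := ∑' p : Nat.Primes, hterm19 g p s

lemma zbound19 (g : ℕ → ℂ) (hg : ∀ n, ‖g n‖ ≤ 1) {τ : ℝ} (p : Nat.Primes)
    {s : ℂ} (hs : τ ≤ s.re) : ‖g p * (p : ℂ) ^ (-s)‖ ≤ (p : ℝ) ^ (-τ) := by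
  have hp : 0 < (p : ℕ) := p.2.pos
  rw [norm_mul, Complex.norm_natCast_cpow_of_pos hp]
  have h1 : ((p : ℕ) : ℝ) ^ (-s).re ≤ ((p : ℕ) : ℝ) ^ (-τ) :=
    Real.rpow_le_rpow_of_exponent_le (by exact_mod_cast hp) (by simpa using hs)
  calc _ ≤ 1 * ((p : ℕ) : ℝ) ^ (-s).re := by gcongr; exact hg _
    _ ≤ _ := by simpa using h1

lemma zlt19 {τ : ℝ} (hτ : 1 / 2 < τ) (p : Nat.Primes) : (p : ℝ) ^ (-τ) ≤ (2:ℝ) ^ (-τ) ∧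
    (2:ℝ) ^ (-τ) < 1 := by
  constructor
  · exact Real.rpow_le_rpow_of_nonpos (by norm_num) (by exact_mod_cast p.2.two_le) (by linarith)
  · exact Real.rpow_lt_one_of_one_lt_of_neg (by norm_num) (by linarith)

lemma hbound19 (g : ℕ → ℂ) (hg : ∀ n, ‖g n‖ ≤ 1) {τ : ℝ} (hτ : 1 / 2 < τ) (p : Nat.Primes)
    {s : ℂ} (hs : τ ≤ s.re) :
    ‖hterm19 g p s‖ ≤ (1 - (2:ℝ) ^ (-τ))⁻¹ / 2 * (p : ℝ) ^ (-(2 * τ)) := by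
  have h1 := zbound19 g hg p hs
  obtain ⟨h2, h3⟩ := zlt19 hτ p
  set z := g p * (p : ℂ) ^ (-s) with hz
  have h4 : ‖-z‖ < 1 := by rw [norm_neg]; linarith
  have h5 := Complex.norm_log_one_add_sub_self_le h4
  have : hterm19 g p s = -(Complex.log (1 + -z) - -z) := by
    rw [hterm19, ← hz]; ring_nf
  rw [this, norm_neg]
  refine h5.trans ?_
  rw [norm_neg]
  have h6 : ((p : ℕ) : ℝ) ^ (-(2 * τ)) = (((p : ℕ) : ℝ) ^ (-τ)) ^ 2 := by
    rw [← Real.rpow_natCast, ← Real.rpow_mul (by positivity)]; congr 1; push_cast; ring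
  rw [h6]
  have h7 : (1 - ‖z‖)⁻¹ ≤ (1 - (2:ℝ) ^ (-τ))⁻¹ := by
    apply inv_anti₀ <;> linarith
  have h8 : 0 ≤ (1 - ‖z‖)⁻¹ := by apply inv_nonneg.mpr; linarith
  calc ‖z‖ ^ 2 * (1 - ‖z‖)⁻¹ / 2 ≤ (((p : ℕ) : ℝ) ^ (-τ)) ^ 2 * (1 - (2:ℝ) ^ (-τ))⁻¹ / 2 := by
        gcongr
    _ = _ := by ring

lemma hsum19 {τ : ℝ} (hτ : 1 / 2 < τ) :
    Summable (fun p : Nat.Primes => (1 - (2:ℝ) ^ (-τ))⁻¹ / 2 * (p : ℝ) ^ (-(2 * τ))) :=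
  (Nat.Primes.summable_rpow.mpr (by linarith)).mul_left _

lemma hdiff19 (g : ℕ → ℂ) (hg : ∀ n, ‖g n‖ ≤ 1) {s : ℂ} (hs : 1 / 2 < s.re) :
    DifferentiableAt ℂ (hser19 g) s := by
  obtain ⟨τ, hτ, hτs⟩ := exists_between hs
  have hU : IsOpen {z : ℂ | τ < z.re} := isOpen_lt continuous_const Complex.continuous_re
  have := Complex.differentiableOn_tsum_of_summable_norm (F := hterm19 g) (hsum19 hτ) (U := {z : ℂ | τ < z.re})
    (by
      intro p z hz
      have hz : τ < z.re := hz
      apply DifferentiableAt.differentiableWithinAt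
      have h1 := zbound19 g hg p hz.le
      obtain ⟨h2, h3⟩ := zlt19 hτ p
      have hp : ((p : ℕ) : ℂ) ≠ 0 := by exact_mod_cast p.2.ne_zero
      have hd : DifferentiableAt ℂ (fun s => g p * ((p : ℕ) : ℂ) ^ (-s)) z :=
        (differentiableAt_id.neg.const_cpow (Or.inl hp)).const_mul _
      refine DifferentiableAt.sub (DifferentiableAt.neg (DifferentiableAt.clog (hd.const_sub 1) ?_)) hd
      rw [sub_eq_add_neg]
      apply Complex.mem_slitPlane_of_norm_lt_one
      rw [norm_neg]
      linarith) hU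
    (fun p z hz => hbound19 g hg hτ p (le_of_lt hz))
  exact this.differentiableAt (hU.mem_nhds hτs)

open Classical in
lemma euler19 (g : ℕ →*₀ ℂ) (hg : ∀ n, ‖g n‖ ≤ 1) {s : ℂ} (hs : 1 < s.re) :
    LSeries g s = Complex.exp (LSeries (fun n => if n.Prime then g n else 0) s + hser19 g s) := by
  have hs0 : -s ≠ 0 := by
    intro h; rw [neg_eq_zero] at h; simp [h] at hs; linarith
  let F : ℕ →*₀ ℂ :=
    { toFun := fun n => g n * (n : ℂ) ^ (-s)
      map_zero' := by simp
      map_one' := by simp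
      map_mul' := by
        intro m n
        simp only [map_mul, Nat.cast_mul]
        rw [Complex.natCast_mul_natCast_cpow]; ring }
  have hterm : ∀ (a : ℕ → ℂ), a 0 = 0 → ∀ n, LSeries.term a s n = a n * (n : ℂ) ^ (-s) := by
    intro a ha n
    rw [LSeries.term_def₀ ha]
  have hsum : Summable (‖F ·‖) := by
    have h1 : LSeriesSummable g s :=
      LSeriesSummable_of_bounded_of_one_lt_re (m := 1) (fun n _ => hg n) hs
    have h2 := h1.norm
    refine h2.congr fun n => ?_
    rw [hterm g (map_zero g)]; rfl
  have h := EulerProduct.exp_tsum_primes_log_eq_tsum (f := F) hsum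
  have e1 : LSeries g s = ∑' n, F n := tsum_congr fun n => hterm g (map_zero g) n
  have e2 : LSeries (fun n => if n.Prime then g n else 0) s = ∑' p : Nat.Primes, F p := by
    have : (∑' p : Nat.Primes, F p) = ∑' n, Set.indicator {n | n.Prime} F n := tsum_subtype {n : ℕ | n.Prime} F
    rw [this]
    refine tsum_congr fun n => ?_
    rw [hterm _ (by simp)]
    by_cases hn : n.Prime
    · rw [Set.indicator_of_mem (by exact hn)]; simp [hn, F]
    · rw [Set.indicator_of_notMem (by exact hn)]; simp [hn]
  have s1 : Summable (fun p : Nat.Primes => F p) := hsum.of_norm.subtype _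
  have s2 : Summable (fun p : Nat.Primes => hterm19 g p s) :=
    Summable.of_norm_bounded (hsum19 (τ := 1) (by norm_num))
      (fun p => hbound19 g hg (by norm_num) p hs.le)
  rw [e1, ← h, e2, hser19, ← s1.tsum_add s2]
  congr 1
  refine tsum_congr fun p => ?_
  simp [F, hterm19]

open ArithmeticFunction in
lemma moeb19 (g : ℕ →*₀ ℂ) (hg : ∀ n, ‖g n‖ ≤ 1) {s : ℂ} (hs : 1 < s.re) :
    LSeries g s * LSeries (fun n => (moebius n : ℂ) * g n) s = 1 := by
  have h1 : LSeriesSummable g s :=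
    LSeriesSummable_of_bounded_of_one_lt_re (m := 1) (fun n _ => hg n) hs
  have h2 : LSeriesSummable (fun n => (moebius n : ℂ) * g n) s := by
    refine LSeriesSummable_of_bounded_of_one_lt_re (m := 1) (fun n _ => ?_) hs
    rw [norm_mul]
    have : ‖(moebius n : ℂ)‖ ≤ 1 := by
      rw [Complex.norm_intCast]; exact_mod_cast abs_moebius_le_one
    exact mul_le_one₀ this (norm_nonneg _) (hg n)
  rw [← LSeries_convolution' h1 h2]
  have : LSeries.convolution g (fun n => (moebius n : ℂ) * g n) = LSeries.delta := by
    have key : LSeries.convolution (1 : ℕ → ℂ) (fun n => (moebius n : ℂ)) = LSeries.delta := by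
      rw [LSeries.one_convolution_eq_zeta_convolution, ← ArithmeticFunction.one_eq_delta]
      simp_rw [← natCoe_apply, ← intCoe_apply, ArithmeticFunction.coe_mul, coe_zeta_mul_coe_moebius]
    ext n
    have k := congrFun key n
    simp only [LSeries.convolution_def] at k ⊢
    have : ∑ p ∈ n.divisorsAntidiagonal, g p.1 * ((moebius p.2 : ℂ) * g p.2)
        = g n * ∑ p ∈ n.divisorsAntidiagonal, (1 : ℕ → ℂ) p.1 * (moebius p.2 : ℂ) := by
      rw [Finset.mul_sum]
      refine Finset.sum_congr rfl fun p hp => ?_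
      rw [(Nat.mem_divisorsAntidiagonal.mp hp).1.symm, map_mul]
      simp; ring
    rw [this, k]
    by_cases h : n = 1 <;> simp [LSeries.delta, h]
  rw [this, LSeries_delta]; rfl

lemma core19 (g : ℕ →*₀ ℂ) (hg : ∀ n, ‖g n‖ ≤ 1) (q : ℕ → ℝ)
    (hq : ∀ n, (if n.Prime then g n else 0) = (q n : ℂ)) (hq1 : ∀ n, |q n| ≤ 1)
    (a : ℕ → ℂ) (ha : ∀ n, ‖a n‖ ≤ 1) (ε : ℝ) (hε : |ε| ≤ 1)
    (hae : ∀ s : ℂ, 1 < s.re → LSeries a s =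
      Complex.exp (ε * (LSeries (fun n => if n.Prime then g n else 0) s + hser19 g s)))
    (C : ℝ) (hC : ∀ N : ℕ, ‖∑ n ∈ Finset.Icc 1 N, a n‖ ≤ C)
    (σ : ℝ) (hσ : σ ∈ Set.Ioc (1 / 2 : ℝ) 1) (k : ℕ) (δ : ℝ) (hδ : 0 < δ)
    (hlow : ∀ᶠ t : ℝ in atTop, δ * (t ^ σ / ∏ j ∈ Finset.Icc 1 k, Real.log^[j] t) ≤
      ε * ∑ n ∈ Finset.Icc 1 ⌊t⌋₊, q n)
    (hO : (fun t : ℝ => ∑ n ∈ Finset.Icc 1 ⌊t⌋₊, q n) =O[atTop] (fun t : ℝ => t ^ σ)) : False := by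
  obtain ⟨hσ1, hσ2⟩ := hσ
  have hb : (fun n => if n.Prime then g n else 0) = (fun n => (q n : ℂ)) := funext hq
  rw [hb] at hae
  set b : ℕ → ℂ := fun n => (q n : ℂ) with hbdef
  have hpb : ∀ t, psum19 b t = ((∑ n ∈ Finset.Icc 1 ⌊t⌋₊, q n : ℝ) : ℂ) := by
    intro t; simp [psum19, hbdef]
  have hOb : psum19 b =O[atTop] (fun t : ℝ => t ^ σ) := by
    rw [← isBigO_norm_left] at hO ⊢
    refine hO.congr_left fun t => ?_
    rw [hpb, Complex.norm_real]
  have hOa : psum19 a =O[atTop] (fun t : ℝ => t ^ (0:ℝ)) := by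
    refine IsBigO.of_bound C (Eventually.of_forall fun t => ?_)
    simpa [psum19] using hC ⌊t⌋₊
  set U : Set ℂ := {z : ℂ | σ < z.re} with hUdef
  have hUo : IsOpen U := isOpen_lt continuous_const Complex.continuous_re
  have hUc : IsPreconnected U := (convex_halfSpace_re_gt σ).isPreconnected
  have hd1 : DifferentiableOn ℂ (dser19 a) U := fun z hz =>
    (dser19_diff a hOa (by have : σ < z.re := hz; linarith)).differentiableWithinAt
  have hd2 : DifferentiableOn ℂ (fun s => Complex.exp (ε * (dser19 b s + hser19 g s))) U := by
    intro z hz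
    have hz : σ < z.re := hz
    exact ((((dser19_diff b hOb hz).add (hdiff19 g hg (by linarith))).const_mul _).cexp).differentiableWithinAt
  have hEq : Set.EqOn (dser19 a) (fun s => Complex.exp (ε * (dser19 b s + hser19 g s))) U := by
    refine (hd1.analyticOnNhd hUo).eqOn_of_preconnected_of_eventuallyEq (hd2.analyticOnNhd hUo) hUc
      (z₀ := 2) (by simp [hUdef]; linarith) ?_
    have hV : {z : ℂ | 1 < z.re} ∈ nhds (2:ℂ) :=
      (isOpen_lt continuous_const Complex.continuous_re).mem_nhds (by simp)
    filter_upwards [hV] with s hs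
    have hs : 1 < s.re := hs
    rw [← dser19_eq a le_rfl hOa (by linarith)
        (LSeriesSummable_of_bounded_of_one_lt_re (m := 1) (fun n _ => ha n) hs),
      ← dser19_eq b (by linarith) hOb (by linarith)
        (LSeriesSummable_of_bounded_of_one_lt_re (m := 1) (fun n _ => by simpa [hbdef] using hq1 n) hs)]
    exact hae s hs
  have hca : ∀ᶠ s : ℝ in nhds σ, ‖dser19 a s‖ < ‖dser19 a σ‖ + 1 := by
    have h1 : ContinuousAt (fun s : ℝ => ‖dser19 a s‖) σ :=
      ((dser19_diff a hOa (s := (σ:ℂ)) (by simp; linarith)).continuousAt.comp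
        Complex.continuous_ofReal.continuousAt).norm
    exact h1.eventually_lt_const (by linarith)
  have hch : ∀ᶠ s : ℝ in nhds σ, ‖hser19 g s‖ < ‖hser19 g σ‖ + 1 := by
    have h1 : ContinuousAt (fun s : ℝ => ‖hser19 g s‖) σ :=
      ((hdiff19 g hg (s := (σ:ℂ)) (by simpa using hσ1)).continuousAt.comp
        Complex.continuous_ofReal.continuousAt).norm
    exact h1.eventually_lt_const (by linarith)
  have hker : ∀ s : ℝ, ∀ t ∈ Set.Ioi (0:ℝ), ((t:ℂ) ^ (-(s:ℂ) - 1) • psum19 b t) =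
      ((t ^ (-s - 1) * ∑ n ∈ Finset.Icc 1 ⌊t⌋₊, q n : ℝ) : ℂ) := by
    intro s t ht
    have ht : 0 < t := ht
    rw [hpb, smul_eq_mul, Complex.ofReal_mul, Complex.ofReal_cpow ht.le]
    push_cast; rfl
  refine lower19 k σ δ (by linarith) hδ (fun t => ε * ∑ n ∈ Finset.Icc 1 ⌊t⌋₊, q n) ?_ ?_ hlow ?_
    ((|Real.log (‖dser19 a σ‖ + 1)| + (‖hser19 g σ‖ + 1)) / σ) ?_
  · intro t ht
    have : ⌊t⌋₊ = 0 := Nat.floor_eq_zero.mpr ht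
    simp [this]
  · intro t ht
    rw [abs_mul]
    have h1 : |∑ n ∈ Finset.Icc 1 ⌊t⌋₊, q n| ≤ ⌊t⌋₊ := by
      refine (Finset.abs_sum_le_sum_abs _ _).trans ?_
      refine (Finset.sum_le_sum fun n _ => hq1 n).trans ?_
      simp
    have h2 := Nat.floor_le ht
    nlinarith [abs_nonneg (∑ n ∈ Finset.Icc 1 ⌊t⌋₊, q n), abs_nonneg ε]
  · intro s hs
    have h1 := dser19_conv b hOb (s := (s:ℂ)) (by simpa using hs)
    rw [MellinConvergent] at h1
    have h2 := (h1.congr_fun (hker s) measurableSet_Ioi).re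
    have h3 := h2.const_mul ε
    refine h3.congr (Eventually.of_forall fun t => ?_)
    simp only [RCLike.re_to_complex, Complex.ofReal_re]
    ring
  · filter_upwards [nhdsWithin_le_nhds hca, nhdsWithin_le_nhds hch, self_mem_nhdsWithin] with s h1 h2 h3
    have hs : σ < s := h3
    have hs0 : 0 < s := by linarith
    have e1 := hEq (show (s:ℂ) ∈ U by simpa [hUdef] using hs)
    set I : ℝ := ∫ t in Set.Ioi (0:ℝ), t ^ (-s - 1) * ∑ n ∈ Finset.Icc 1 ⌊t⌋₊, q n with hI
    have e2 : dser19 b s = ((s * I : ℝ) : ℂ) := by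
      rw [dser19, mellin, MeasureTheory.setIntegral_congr_fun measurableSet_Ioi (hker s),
        integral_complex_ofReal, Complex.ofReal_mul]
    have e3 : ∫ t in Set.Ioi (0:ℝ), t ^ (-s - 1) * (ε * ∑ n ∈ Finset.Icc 1 ⌊t⌋₊, q n) = ε * I := by
      rw [hI, ← MeasureTheory.integral_const_mul]
      congr 1; ext t; ring
    rw [e3]
    rw [e1] at h1
    simp only [] at h1
    rw [Complex.norm_exp, e2] at h1
    have e4 : ((ε:ℂ) * (((s * I : ℝ) : ℂ) + hser19 g s)).re = ε * (s * I + (hser19 g s).re) := by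
      rw [Complex.re_ofReal_mul, Complex.add_re, Complex.ofReal_re]
    rw [e4] at h1
    have h5 := (Real.lt_log_iff_exp_lt (by positivity)).mpr h1
    have h6 := le_abs_self (Real.log (‖dser19 a σ‖ + 1))
    have h7 : |ε * (hser19 g s).re| ≤ ‖hser19 g s‖ := by
      rw [abs_mul]
      have := Complex.abs_re_le_norm (hser19 g s)
      nlinarith [abs_nonneg (hser19 g s).re]
    have h8 := (abs_le.mp h7).1
    have h9 : s * (ε * I) ≤ |Real.log (‖dser19 a σ‖ + 1)| + (‖hser19 g σ‖ + 1) := by nlinarith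
    rw [le_div_iff₀ (by linarith)]
    rcases le_or_gt (ε * I) 0 with h | h
    · have : 0 ≤ |Real.log (‖dser19 a σ‖ + 1)| + (‖hser19 g σ‖ + 1) := by positivity
      nlinarith
    · nlinarith

/-- If `f` is completely multiplicative with values in `{-1, 1}`, `1/2 < σ ≤ 1`, `k ≥ 1`,
`c ∈ [-1, 1]` is nonzero, and
`∑_{p ≤ x} f p = c·x^σ/(log x · log₂ x ··· log_k x)·(1 + o(1))`, where `log_j` is the
`j`-fold iterated logarithm, then: if `c > 0` the partial sums of `f` are unbounded, and
if `c < 0` the partial sums of `μ·f` are unbounded. -/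
theorem stmt_19 (f : ℕ → ℤ)
    (hf1 : f 1 = 1)
    (hfmul : ∀ a b : ℕ, f (a * b) = f a * f b)
    (hfpm : ∀ n : ℕ, 1 ≤ n → f n = 1 ∨ f n = -1)
    (σ : ℝ) (hσ : σ ∈ Set.Ioc (1 / 2 : ℝ) 1)
    (k : ℕ) (hk : 1 ≤ k)
    (c : ℝ) (hc : c ∈ Set.Icc (-1 : ℝ) 1) (hc0 : c ≠ 0)
    (hasymp : (fun x : ℝ => (∑ p ∈ Nat.primesBelow (⌊x⌋₊ + 1), (f p : ℝ))
        - c * (x ^ σ / ∏ j ∈ Finset.Icc 1 k, Real.log^[j] x))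
      =o[atTop] (fun x : ℝ => x ^ σ / ∏ j ∈ Finset.Icc 1 k, Real.log^[j] x)) :
    (0 < c → ∀ C : ℝ, ∃ N : ℕ, C < |((∑ n ∈ Finset.Icc 1 N, f n : ℤ) : ℝ)|) ∧
    (c < 0 → ∀ C : ℝ, ∃ N : ℕ,
      C < |((∑ n ∈ Finset.Icc 1 N, ArithmeticFunction.moebius n * f n : ℤ) : ℝ)|) := by
  classical
  have hb : ∀ n, 1 ≤ n → |(f n : ℝ)| = 1 := by
    intro n hn
    rcases hfpm n hn with h | h <;> simp [h]
  let g : ℕ →*₀ ℂ :=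
    { toFun := fun n => if n = 0 then 0 else (f n : ℂ)
      map_zero' := by simp
      map_one' := by simp [hf1]
      map_mul' := by
        intro m n
        by_cases hm : m = 0
        · simp [hm]
        by_cases hn : n = 0
        · simp [hn]
        simp [hm, hn, hfmul] }
  have hgn : ∀ n, 1 ≤ n → g n = (f n : ℂ) := fun n hn => if_neg (by omega)
  have hg : ∀ n, ‖g n‖ ≤ 1 := by
    intro n
    rcases Nat.eq_zero_or_pos n with rfl | hn
    · simp
    · rw [hgn n hn, Complex.norm_intCast, hb n hn]
  set q : ℕ → ℝ := fun n => if n.Prime then (f n : ℝ) else 0 with hqdef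
  have hq : ∀ n, (if n.Prime then g n else 0) = (q n : ℂ) := by
    intro n
    by_cases hn : n.Prime
    · simp [hqdef, hn, hgn n hn.pos]
    · simp [hqdef, hn]
  have hq1 : ∀ n, |q n| ≤ 1 := by
    intro n
    by_cases hn : n.Prime
    · simp only [hqdef, hn, if_true]; exact (hb n hn.pos).le
    · simp [hqdef, hn]
  have hQ : ∀ t : ℝ, ∑ p ∈ Nat.primesBelow (⌊t⌋₊ + 1), (f p : ℝ) = ∑ n ∈ Finset.Icc 1 ⌊t⌋₊, q n := by
    intro t
    rw [hqdef, ← Finset.sum_filter]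
    apply Finset.sum_congr _ (fun _ _ => rfl)
    ext p
    simp only [Nat.mem_primesBelow, Finset.mem_filter, Finset.mem_Icc]
    constructor
    · rintro ⟨h1, h2⟩; exact ⟨⟨h2.pos, by omega⟩, h2⟩
    · rintro ⟨⟨_, h1⟩, h2⟩; exact ⟨by omega, h2⟩
  simp only [hQ] at hasymp
  have hev : ∀ᶠ t : ℝ in atTop, 1 ≤ ∏ j ∈ Finset.Icc 1 k, Real.log^[j] t := by
    have : ∀ᶠ t : ℝ in atTop, ∀ j ∈ Finset.Icc 1 k, 1 ≤ Real.log^[j] t := by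
      rw [Filter.eventually_all_finset]
      exact fun j _ => (logit19_tendsto j).eventually_ge_atTop 1
    filter_upwards [this] with t ht
    calc (1:ℝ) = ∏ j ∈ Finset.Icc 1 k, 1 := by simp
      _ ≤ _ := Finset.prod_le_prod (fun _ _ => zero_le_one) ht
  have hLO : (fun x : ℝ => x ^ σ / ∏ j ∈ Finset.Icc 1 k, Real.log^[j] x) =O[atTop]
      (fun x : ℝ => x ^ σ) := by
    refine IsBigO.of_bound 1 ?_
    filter_upwards [hev, eventually_gt_atTop 0] with t ht ht0
    rw [norm_div, one_mul]
    apply div_le_self (norm_nonneg _)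
    exact ht.trans (le_abs_self _)
  have hO : (fun t : ℝ => ∑ n ∈ Finset.Icc 1 ⌊t⌋₊, q n) =O[atTop] (fun t : ℝ => t ^ σ) := by
    have h1 := hasymp.isBigO.add ((isBigO_refl (fun x : ℝ => x ^ σ / ∏ j ∈ Finset.Icc 1 k,
      Real.log^[j] x) atTop).const_mul_left c)
    refine IsBigO.trans (h1.congr_left fun t => ?_) hLO
    ring
  have hcpos : 0 < |c| := abs_pos.mpr hc0
  have hbd : ∀ᶠ t : ℝ in atTop, |(∑ n ∈ Finset.Icc 1 ⌊t⌋₊, q n)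
      - c * (t ^ σ / ∏ j ∈ Finset.Icc 1 k, Real.log^[j] t)| ≤
      |c| / 2 * (t ^ σ / ∏ j ∈ Finset.Icc 1 k, Real.log^[j] t) := by
    filter_upwards [hasymp.bound (half_pos hcpos), hev, eventually_gt_atTop 0] with t h1 h2 h3
    have h4 : 0 ≤ t ^ σ / ∏ j ∈ Finset.Icc 1 k, Real.log^[j] t :=
      div_nonneg (Real.rpow_nonneg h3.le _) (by linarith)
    rwa [Real.norm_eq_abs, Real.norm_eq_abs, abs_of_nonneg h4] at h1
  constructor
  · intro hc1 C
    by_contra! hcon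
    refine core19 g hg q hq hq1 g hg 1 (by simp) ?_ C ?_ σ hσ k (|c| / 2) (half_pos hcpos) ?_ hO
    · intro s hs
      rw [euler19 g hg hs]
      simp
    · intro N
      have h1 := hcon N
      have h2 : ∑ n ∈ Finset.Icc 1 N, g n = ((∑ n ∈ Finset.Icc 1 N, f n : ℤ) : ℂ) := by
        push_cast
        exact Finset.sum_congr rfl fun n hn => hgn n (Finset.mem_Icc.mp hn).1
      rw [h2, Complex.norm_intCast]
      exact h1
    · filter_upwards [hbd] with t ht
      have := (abs_le.mp ht).1
      rw [abs_of_pos hc1] at this ⊢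
      linarith
  · intro hc1 C
    by_contra! hcon
    refine core19 g hg q hq hq1 (fun n => (ArithmeticFunction.moebius n : ℂ) * g n) ?_ (-1) (by simp)
      ?_ C ?_ σ hσ k (|c| / 2) (half_pos hcpos) ?_ hO
    · intro n
      rw [norm_mul]
      have : ‖(ArithmeticFunction.moebius n : ℂ)‖ ≤ 1 := by
        rw [Complex.norm_intCast]; exact_mod_cast ArithmeticFunction.abs_moebius_le_one
      exact mul_le_one₀ this (norm_nonneg _) (hg n)
    · intro s hs
      have h1 := moeb19 g hg hs
      have h2 := eq_inv_of_mul_eq_one_right h1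
      rw [h2, euler19 g hg hs, ← Complex.exp_neg]
      congr 1
      push_cast
      ring_nf
    · intro N
      have h1 := hcon N
      have h2 : ∑ n ∈ Finset.Icc 1 N, (ArithmeticFunction.moebius n : ℂ) * g n
          = ((∑ n ∈ Finset.Icc 1 N, ArithmeticFunction.moebius n * f n : ℤ) : ℂ) := by
        push_cast
        exact Finset.sum_congr rfl fun n hn => by rw [hgn n (Finset.mem_Icc.mp hn).1]
      rw [h2, Complex.norm_intCast]
      exact h1
    · filter_upwards [hbd] with t ht
      have := (abs_le.mp ht).2
      rw [abs_of_neg hc1] at this ⊢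
      linarith
end
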